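/- arXiv:2002.09294 — 2 statements merged into one kernel-verified Lean document; each statement's English description precedes it below -/
import Mathlib

section
/- Let X be a standard Borel space, E a countable Borel equivalence relation on X, ρ : E → (0,∞) a Borel cocycle, and B ⊆ X a Borel set with positive ρ-density. Then every finite Borel measure on B that is invariant with respect to the restriction of ρ to E restricted to B extends to a ρ-invariant finite Borel measure on X. -/
open MeasureTheory Set ENNReal

namespace CocycleNadkarni

variable {X : Type*} {Γ : Type*}

/-- The `ρ`-size of `Y` relative to the point `z`: `∑_{y ∈ Y} ρ(y, z)`. -/
noncomputable def eSize (ρ : X → X → ℝ) (Y : Set X) (z : X) : ℝ≥0∞ :=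
  ∑' y : Y, ENNReal.ofReal (ρ y z)

/-- The `ρ`-size of `Y` relative to the set `Z`, computed at the point `z`. -/
noncomputable def relSize (ρ : X → X → ℝ) (Y Z : Set X) (z : X) : ℝ≥0∞ :=
  eSize ρ Y z / eSize ρ Z z

/-- Real-valued `ρ`-size (used for finite sets). -/
noncomputable def rSize (ρ : X → X → ℝ) (Y : Set X) (z : X) : ℝ :=
  ∑' y : Y, ρ y z

/-- `∫_C f dμ^ρ_S`, computed at the point `z`. -/
noncomputable def avgOn (ρ : X → X → ℝ) (f : X → ℝ) (S C : Set X) (z : X) : ℝ :=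
  (∑' y : ↥(S ∩ C), f y * ρ y z) / rSize ρ S z

/-- countable Borel equivalence relation -/
def IsCBER [MeasurableSpace X] (E : X → X → Prop) : Prop :=
  Equivalence E ∧ MeasurableSet {p : X × X | E p.1 p.2} ∧ ∀ x : X, {y | E x y}.Countable

/-- Borel cocycle `ρ : E → (0, ∞)` (as a total function whose values off `E` are irrelevant). -/
def IsCocycle [MeasurableSpace X] (E : X → X → Prop) (ρ : X → X → ℝ) : Prop :=
  Measurable (fun p : X × X => ρ p.1 p.2) ∧
    (∀ ⦃x y : X⦄, E x y → 0 < ρ x y) ∧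
    ∀ ⦃x y z : X⦄, E x y → E y z → ρ x z = ρ x y * ρ y z

/-- Borel cocycle into a group `Γ`. -/
def IsGrpCocycle [MeasurableSpace X] [Group Γ] [MeasurableSpace Γ]
    (E : X → X → Prop) (ρ : X → X → Γ) : Prop :=
  Measurable (fun p : X × X => ρ p.1 p.2) ∧
    ∀ ⦃x y z : X⦄, E x y → E y z → ρ x z = ρ x y * ρ y z

/-- finite Borel subequivalence relation of `E` -/
def IsFinSubequiv [MeasurableSpace X] (E F : X → X → Prop) : Prop :=
  Equivalence F ∧ MeasurableSet {p : X × X | F p.1 p.2} ∧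
    (∀ ⦃x y : X⦄, F x y → E x y) ∧ ∀ x : X, {y | F x y}.Finite

/-- finite Borel subequivalence relation of `E` restricted to `W` (extended by the diagonal). -/
def IsFinSubequivOn [MeasurableSpace X] (E : X → X → Prop) (W : Set X)
    (F : X → X → Prop) : Prop :=
  Equivalence F ∧ MeasurableSet {p : X × X | F p.1 p.2} ∧
    (∀ ⦃x y : X⦄, F x y → x = y ∨ (E x y ∧ x ∈ W ∧ y ∈ W)) ∧ ∀ x : X, {y | F x y}.Finite

/-- `ρ`-invariance of a Borel measure. -/
def IsInvariant [MeasurableSpace X] (E : X → X → Prop) (ρ : X → X → ℝ)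
    (μ : Measure X) : Prop :=
  ∀ T : X ≃ᵐ X, (∀ x, E (T x) x) → ∀ B : Set X, MeasurableSet B →
    μ (T '' B) = ∫⁻ x in B, ENNReal.ofReal (ρ (T x) x) ∂μ

/-- invariance w.r.t. the restriction of `ρ` to a set `R` of pairs, via Borel injections
whose graphs are contained in `R⁻¹`. -/
def IsInvariantRel [MeasurableSpace X] (R : Set (X × X)) (ρ : X → X → ℝ)
    (μ : Measure X) : Prop :=
  ∀ (B : Set X) (T : X → X), MeasurableSet B → Measurable T → Set.InjOn T B →
    (∀ x ∈ B, ((T x, x) : X × X) ∈ R) →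
    μ (T '' B) = ∫⁻ x in B, ENNReal.ofReal (ρ (T x) x) ∂μ

/-- a Borel ℕ-coloring of the lacunarity digraph `G^ρ_Z`. -/
def HasColoring [MeasurableSpace X] (E : X → X → Prop) (ρ : X → X → Γ)
    (Z : Set Γ) : Prop :=
  ∃ c : X → ℕ, Measurable c ∧
    ∀ ⦃x y : X⦄, x ≠ y → E x y → ρ x y ∈ Z → c x ≠ c y

/-- smoothness of the cocycle `ρ` restricted to `E` restricted to `W`. -/
def SmoothOn [MeasurableSpace X] (E : X → X → Prop) (ρ : X → X → ℝ)
    (W : Set X) : Prop :=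
  ∃ U : Set ℝ, IsOpen U ∧ (1:ℝ) ∈ U ∧ U ⊆ Set.Ioi 0 ∧
    ∃ c : X → ℕ, Measurable c ∧
      ∀ ⦃x y : X⦄, x ∈ W → y ∈ W → x ≠ y → E x y → ρ x y ∈ U → c x ≠ c y

/-- smoothness of the cocycle `ρ` on `E`. -/
def Smooth [MeasurableSpace X] (E : X → X → Prop) (ρ : X → X → ℝ) : Prop :=
  SmoothOn E ρ Set.univ

/-- `E`-invariance of a set. -/
def EInvariant (E : X → X → Prop) (B : Set X) : Prop :=
  ∀ ⦃x y : X⦄, E x y → x ∈ B → y ∈ B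

/-- a compression of `ρ` over the finite subequivalence relation `F` of `E`. -/
def CompressionOver [MeasurableSpace X] (E F : X → X → Prop) (ρ : X → X → ℝ)
    (φ : X → X) : Prop :=
  (∀ x, E x (φ x)) ∧
  (∀ x : X, relSize ρ (φ ⁻¹' {y | F y x}) {y | F y x} x ≤ 1) ∧
  (∀ x : X, ∃ y, E x y ∧ relSize ρ (φ ⁻¹' {z | F z y}) {z | F z y} y < 1)

/-- a compression of the quotient of `ρ | E | W` by the finite subequivalence relation given
by the setoid `s`, expressed via representatives. -/
def QuotCompressionOn [MeasurableSpace X] (E : X → X → Prop) (ρ : X → X → ℝ)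
    (W : Set X) (s : Setoid X) (φ : Quotient s → Quotient s) : Prop :=
  (∀ ⦃x : X⦄, x ∈ W → ∀ y : X, φ (Quotient.mk s x) = Quotient.mk s y → (E x y ∧ y ∈ W)) ∧
  (∀ ⦃x : X⦄, x ∈ W →
    relSize ρ {y | y ∈ W ∧ φ (Quotient.mk s y) = Quotient.mk s x} {y | s.r y x} x ≤ 1) ∧
  (∀ ⦃x : X⦄, x ∈ W → ∃ y, y ∈ W ∧ E x y ∧
    relSize ρ {z | z ∈ W ∧ φ (Quotient.mk s z) = Quotient.mk s y} {z | s.r z y} y < 1)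


/-- `B` has `ρ`-density at least `ε` relative to `W`. -/
def HasDensityAtLeastOn [MeasurableSpace X] (E : X → X → Prop) (ρ : X → X → ℝ)
    (B W : Set X) (ε : ℝ) : Prop :=
  ∃ F : X → X → Prop, IsFinSubequivOn E W F ∧
    ∀ x ∈ W, ENNReal.ofReal ε ≤ relSize ρ (B ∩ {y | F y x}) {y | F y x} x

/-- `B` has positive `ρ`-density relative to `W`. -/
def HasPosDensityOn [MeasurableSpace X] (E : X → X → Prop) (ρ : X → X → ℝ)
    (B W : Set X) : Prop :=
  ∃ ε : ℝ, 0 < ε ∧ HasDensityAtLeastOn E ρ B W ε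

/-- `B` has σ-positive `ρ`-density relative to `W`. -/
def HasSigmaPosDensityOn [MeasurableSpace X] (E : X → X → Prop) (ρ : X → X → ℝ)
    (B W : Set X) : Prop :=
  ∃ A : ℕ → Set X, (∀ n, MeasurableSet (A n)) ∧ (∀ n, A n ⊆ W) ∧
    (∀ n, ∀ x ∈ A n, ∀ y ∈ W, E x y → y ∈ A n) ∧ W = ⋃ n, A n ∧
    ∀ n, HasPosDensityOn E ρ (B ∩ A n) (A n)

/-
The density assumption provides a finite Borel subequivalence relation `F` of `E`. Spread the mass
of each point `x` over its class `[x]_F` proportionally to `ρ`, normalised so that a unit mass at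
`x` puts mass `1` on `B ∩ [x]_F`. Its total mass after spreading is the inverse of the relative
`ρ`-size of `B` in `[x]_F`, hence at most `ε⁻¹`, so the spread of a finite measure is finite.

That the spread of `μ` restricts to `μ` on `B` and is `ρ`-invariant follows from two facts. The
weights are reversible with respect to `ρ`, and `μ` obeys the mass transport principle: for a
Borel transport within `E ↾ B` in which each point exchanges mass with only finitely many others,
the mass sent and the mass received, compared through `ρ`, have equal integrals. By the
Lusin–Novikov theorem for finite sections, the latter reduces to Borel partial injections with
graph in `E ↾ B`, and these split into pieces on which they are the identity and pieces disjoint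
from their image, from which they extend to involutive automorphisms.
-/

section Separation

/-- Bar induction along the tree of finite sequences, whose nodes are the cylinders. -/
theorem cylinder_induction {E : ℕ → Type*} {Q : Set (∀ n, E n) → Prop} (z₀ : ∀ n, E n)
    (step : ∀ z n, (∀ k, Q (PiNat.cylinder (Function.update z n k) (n + 1))) →
      Q (PiNat.cylinder z n))
    (bar : ∀ z, ∃ n, Q (PiNat.cylinder z n)) : Q univ := by
  by_contra hQ
  have extend : ∀ n (z : {z : ∀ n, E n // ¬ Q (PiNat.cylinder z n)}),
      ∃ k, ¬ Q (PiNat.cylinder (Function.update z.1 n k) (n + 1)) := fun n z => by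
    by_contra! h
    exact z.2 (step z.1 n h)
  choose k hk using extend
  let Z : ∀ n, {z : ∀ n, E n // ¬ Q (PiNat.cylinder z n)} := fun n =>
    n.rec ⟨z₀, by rwa [PiNat.cylinder_zero]⟩ fun n z => ⟨Function.update z.1 n (k n z), hk n z⟩
  have Z_succ : ∀ n, (Z (n + 1)).1 = Function.update (Z n).1 n (k n (Z n)) := fun _ => rfl
  let z : ∀ n, E n := fun n => (Z (n + 1)).1 n
  have stable : ∀ n, ∀ i < n, (Z n).1 i = z i := by
    intro n
    induction n with
    | zero => exact fun i hi => absurd hi i.not_lt_zero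
    | succ n ih =>
      intro i hi
      rcases Nat.lt_succ_iff_lt_or_eq.1 hi with h | rfl
      · rw [Z_succ, Function.update_of_ne h.ne, ih i h]
      · rfl
  obtain ⟨n, hn⟩ := bar z
  have cylinder_eq : PiNat.cylinder (Z n).1 n = PiNat.cylinder z n :=
    PiNat.mem_cylinder_iff_eq.1 (PiNat.mem_cylinder_iff.2 (stable n))
  exact (Z n).2 (cylinder_eq ▸ hn)

variable {α ι : Type*} [MeasurableSpace α]

/-- A family of sets is Borel separated if its members can be enlarged to measurable sets with
empty intersection, which is the conclusion of Novikov's separation theorem. -/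
def BorelSeparated (A : ι → Set α) : Prop :=
  ∃ C : ι → Set α, (∀ i, MeasurableSet (C i)) ∧ (∀ i, A i ⊆ C i) ∧ ⋂ i, C i = ∅

theorem BorelSeparated.of_subset_iUnion {κ : Type*} [Countable κ] {A : ι → Set α}
    {A' : κ → ι → Set α} (m : ι) (hA' : ∀ k, BorelSeparated (A' k))
    (hm : A m ⊆ ⋃ k, A' k m) (hne : ∀ k, ∀ i ≠ m, A i ⊆ A' k i) : BorelSeparated A := by
  classical
  choose C hC hsub hempty using hA'
  refine ⟨fun i => if i = m then ⋃ k, C k m else ⋂ k, C k i, fun i => ?_, fun i => ?_, ?_⟩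
  · dsimp only
    split_ifs
    · exact .iUnion fun k => hC k m
    · exact .iInter fun k => hC k i
  · dsimp only
    split_ifs with h
    · exact h ▸ hm.trans (iUnion_mono fun k => hsub k m)
    · exact subset_iInter fun k => (hne k i h).trans (hsub k i)
  · refine eq_empty_of_forall_notMem fun x hx => ?_
    rw [mem_iInter] at hx
    obtain ⟨k, hk⟩ : ∃ k, x ∈ C k m := by simpa using hx m
    refine (hempty k).subset (mem_iInter.2 fun i => ?_ : x ∈ ⋂ i, C k i)
    rcases eq_or_ne i m with rfl | h
    · exact hk
    · exact mem_iInter.1 (by simpa [h] using hx i) k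

theorem BorelSeparated.of_measurable_disjoint {A : ι → Set α} {i j : ι}
    (hij : i ≠ j) {U V : Set α} (hU : MeasurableSet U) (hV : MeasurableSet V)
    (hi : A i ⊆ U) (hj : A j ⊆ V) (hUV : Disjoint U V) : BorelSeparated A := by
  classical
  refine ⟨fun k => if k = i then U else if k = j then V else univ, fun k => ?_, fun k => ?_, ?_⟩
  · exact .ite' (fun _ => hU) fun _ => .ite' (fun _ => hV) fun _ => .univ
  · dsimp only
    split_ifs with h h'
    exacts [h ▸ hi, h' ▸ hj, subset_univ _]
  · refine eq_empty_of_forall_notMem fun x hx => hUV.notMem_of_mem_left (a := x) ?_ ?_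
    · simpa using mem_iInter.1 hx i
    · simpa [hij.symm] using mem_iInter.1 hx j

variable [TopologicalSpace α] [T2Space α] [OpensMeasurableSpace α]

theorem borelSeparated_range {f : ℕ → (ℕ → ℕ) → α} (hf : ∀ n, Continuous (f n))
    (hempty : ⋂ n, range (f n) = ∅) : BorelSeparated fun n => range (f n) := by
  -- A single point of Baire space codes one argument for each `f n`.
  let g : ℕ → (ℕ → ℕ) → α := fun n z => f n fun k => z (Nat.pair n k)
  have hg : ∀ n, Continuous (g n) := fun n =>
    (hf n).comp (continuous_pi fun k => continuous_apply _)
  have range_g : ∀ n, range (g n) = range (f n) := fun n =>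
    Function.Surjective.range_comp (fun u => ⟨fun j => u j.unpair.2, by simp⟩) (f n)
  suffices BorelSeparated fun n => g n '' univ by simpa only [image_univ, range_g] using this
  refine cylinder_induction (Q := fun S => BorelSeparated fun n => g n '' S) 0
    (fun z j hz => .of_subset_iUnion j.unpair.1 hz ?_ ?_) fun z => ?_
  · rw [← image_iUnion, PiNat.iUnion_cylinder_update z j]
  · rintro k n hn _ ⟨u, hu, rfl⟩
    -- `g n` does not read the coordinate `j`
    refine ⟨Function.update u j k, ?_, congrArg (f n) (funext fun i => ?_)⟩
    · rw [PiNat.mem_cylinder_iff]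
      intro i hi
      rcases eq_or_ne i j with rfl | h
      · simp only [Function.update_self]
      · simpa only [Function.update_of_ne h] using
          PiNat.mem_cylinder_iff.1 hu i (lt_of_le_of_ne (Nat.lt_succ_iff.1 hi) h)
    · exact Function.update_of_ne (fun h => hn (by rw [← h, Nat.unpair_pair])) _ _
  · obtain ⟨n, hn⟩ : ∃ n, g n z ≠ g 0 z := by
      by_contra! h
      refine hempty.subset (mem_iInter.2 fun n => ?_ : g 0 z ∈ ⋂ n, range (f n))
      exact range_g n ▸ ⟨z, h n⟩
    obtain ⟨U, V, hU, hV, hzU, hzV, hUV⟩ := t2_separation hn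
    obtain ⟨_, ⟨u, m, rfl⟩, hzu, hsub⟩ :=
      (PiNat.isTopologicalBasis_cylinders fun _ => ℕ).exists_subset_of_mem_open
        (show z ∈ g n ⁻¹' U ∩ g 0 ⁻¹' V from ⟨hzU, hzV⟩)
        ((hU.preimage (hg n)).inter (hV.preimage (hg 0)))
    rw [← PiNat.mem_cylinder_iff_eq.1 hzu] at hsub
    exact ⟨m, .of_measurable_disjoint (i := n) (j := 0) (by rintro rfl; exact hn rfl)
      hU.measurableSet hV.measurableSet (image_subset_iff.2 fun v hv => (hsub hv).1)
      (image_subset_iff.2 fun v hv => (hsub hv).2) hUV⟩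

theorem borelSeparated_of_analyticSet {A : ℕ → Set α} (hA : ∀ n, AnalyticSet (A n))
    (hempty : ⋂ n, A n = ∅) : BorelSeparated A := by
  by_cases hne : ∃ n, A n = ∅
  · obtain ⟨n, hn⟩ := hne
    exact .of_measurable_disjoint (i := n) (j := n + 1) n.lt_succ_self.ne .empty .univ hn.subset
      (subset_univ _) (empty_disjoint _)
  · push Not at hne
    simp_rw [AnalyticSet] at hA
    choose f hf hrange using fun n => (hA n).resolve_left (hne n).ne_empty
    obtain rfl : (fun n => range (f n)) = A := funext hrange
    exact borelSeparated_range hf hempty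

end Separation

section FiniteSections

open scoped Function

variable {α β : Type*} [MeasurableSpace β] [StandardBorelSpace β]

/-- The points of `P ⊆ α × β` having another point of `P` at distance less than `δ` in the same
vertical section, where distances in `β` are measured along a fixed Borel embedding into `ℝ`. -/
def crowdedPoints (P : Set (α × β)) (δ : ℝ) : Set (α × β) :=
  {p ∈ P | ∃ y, (p.1, y) ∈ P ∧ y ≠ p.2 ∧ |embeddingReal β y - embeddingReal β p.2| < δ}

theorem iInter_crowdedPoints {P : Set (α × β)} (hfin : ∀ x, {y | (x, y) ∈ P}.Finite) :
    ⋂ n : ℕ, crowdedPoints P (1 / (n + 1)) = ∅ := by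
  refine eq_empty_of_forall_notMem fun ⟨x, y⟩ hxy => ?_
  rw [mem_iInter] at hxy
  set e := embeddingReal β
  obtain ⟨z, ⟨-, hzy⟩, hmin⟩ := Set.exists_min_image {z | (x, z) ∈ P ∧ z ≠ y}
    (fun z => |e z - e y|) ((hfin x).subset fun z hz => hz.1)
    (by obtain ⟨-, z, hz, hzy, -⟩ := hxy 0; exact ⟨z, hz, hzy⟩)
  have hpos : 0 < |e z - e y| :=
    abs_pos.2 (sub_ne_zero.2 ((measurableEmbedding_embeddingReal β).injective.ne hzy))
  obtain ⟨n, hn⟩ := exists_nat_one_div_lt hpos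
  obtain ⟨-, z', hz', hzy', hlt⟩ := hxy n
  exact (hmin z' ⟨hz', hzy'⟩).not_gt (hlt.trans hn)

theorem injOn_fst_of_forall_notMem_crowdedPoints {P G : Set (α × β)} {δ : ℝ} (hGP : G ⊆ P)
    (hG : ∀ p ∈ G, p ∉ crowdedPoints P δ)
    (hsmall : ∀ p ∈ G, ∀ q ∈ G, |embeddingReal β p.2 - embeddingReal β q.2| < δ) :
    InjOn Prod.fst G := by
  rintro ⟨x, y⟩ hp ⟨_, y'⟩ hq rfl
  by_contra hne
  exact hG _ hq ⟨hGP hq, y, hGP hp, fun h => hne (by rw [h]), hsmall _ hp _ hq⟩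

variable [MeasurableSpace α] [StandardBorelSpace α]

theorem analyticSet_crowdedPoints [TopologicalSpace α] [SecondCountableTopology α]
    [OpensMeasurableSpace α] [TopologicalSpace β] [SecondCountableTopology β]
    [OpensMeasurableSpace β] {P : Set (α × β)} (hP : MeasurableSet P) (δ : ℝ) :
    AnalyticSet (crowdedPoints P δ) := by
  have hpair : Measurable fun q : (α × β) × β => (q.1.1, q.2) := by fun_prop
  have he := measurable_embeddingReal β
  have hdist : Measurable fun q : (α × β) × β =>
      |embeddingReal β q.2 - embeddingReal β q.1.2| :=
    ((he.comp measurable_snd).sub (he.comp (measurable_snd.comp measurable_fst))).abs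
  have hset : MeasurableSet {q : (α × β) × β | q.1 ∈ P ∧ (q.1.1, q.2) ∈ P ∧ q.2 ≠ q.1.2 ∧
      |embeddingReal β q.2 - embeddingReal β q.1.2| < δ} :=
    (measurable_fst hP).inter <| (hpair hP).inter <|
      (measurableSet_eq_fun measurable_snd (measurable_snd.comp measurable_fst)).compl.inter <|
      measurableSet_lt hdist measurable_const
  convert hset.analyticSet_image measurable_fst using 1
  ext p
  simp [crowdedPoints]

theorem exists_iUnion_eq_injOn_fst {P : Set (α × β)} (hP : MeasurableSet P)
    (hfin : ∀ x, {y | (x, y) ∈ P}.Finite) :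
    ∃ G : ℕ × ℤ → Set (α × β), (∀ i, MeasurableSet (G i)) ∧ (∀ i, InjOn Prod.fst (G i)) ∧
      ⋃ i, G i = P := by
  let := upgradeStandardBorel α
  let := upgradeStandardBorel β
  obtain ⟨C, hC, hsub, hempty⟩ := borelSeparated_of_analyticSet
    (fun n : ℕ => analyticSet_crowdedPoints hP (1 / (n + 1))) (iInter_crowdedPoints hfin)
  let cell : ℕ × ℤ → Set (α × β) := fun i => {p | ⌊(i.1 + 1) * embeddingReal β p.2⌋ = i.2}
  have hcell : ∀ i, MeasurableSet (cell i) := fun i =>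
    measurableSet_eq_fun (((measurable_embeddingReal β).comp measurable_snd).const_mul _).floor
      measurable_const
  refine ⟨fun i => (P \ C i.1) ∩ cell i, fun i => (hP.diff (hC i.1)).inter (hcell i),
    fun i => ?_, ?_⟩
  · refine injOn_fst_of_forall_notMem_crowdedPoints (inter_subset_left.trans sdiff_subset)
      (fun p hp hcrowd => hp.1.2 (hsub i.1 hcrowd)) fun p hp q hq => ?_
    have := Int.abs_sub_lt_one_of_floor_eq_floor (hp.2.trans hq.2.symm)
    rwa [← mul_sub, abs_mul, abs_of_pos (by positivity), ← lt_div_iff₀' (by positivity)] at this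
  · refine (iUnion_subset fun i => inter_subset_left.trans sdiff_subset).antisymm fun p hp => ?_
    obtain ⟨n, hn⟩ : ∃ n, p ∉ C n := by
      by_contra! h
      exact hempty.subset (mem_iInter.2 h : p ∈ ⋂ n, C n)
    exact mem_iUnion.2 ⟨(n, ⌊(n + 1) * embeddingReal β p.2⌋), ⟨hp, hn⟩, rfl⟩

/-- The Lusin–Novikov uniformization theorem for sets with finite sections. -/
theorem exists_iUnion_disjoint_injOn_fst {P : Set (α × β)} (hP : MeasurableSet P)
    (hfin : ∀ x, {y | (x, y) ∈ P}.Finite) :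
    ∃ G : ℕ → Set (α × β), (∀ n, MeasurableSet (G n)) ∧ (∀ n, InjOn Prod.fst (G n)) ∧
      Pairwise (Disjoint on G) ∧ ⋃ n, G n = P := by
  obtain ⟨G, hG, hinj, hGP⟩ := exists_iUnion_eq_injOn_fst hP hfin
  obtain ⟨u, hu⟩ := exists_surjective_nat (ℕ × ℤ)
  exact ⟨disjointed (G ∘ u), .disjointed fun n => hG (u n),
    fun n => (hinj (u n)).mono (disjointed_subset _ n), disjoint_disjointed _,
    by rw [iUnion_disjointed, ← hGP]; exact hu.iUnion_comp G⟩

theorem exists_iUnion_disjoint_injOn_fst_injOn_snd {P : Set (α × β)} (hP : MeasurableSet P)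
    (hfst : ∀ x, {y | (x, y) ∈ P}.Finite) (hsnd : ∀ y, {x | (x, y) ∈ P}.Finite) :
    ∃ G : ℕ × ℕ → Set (α × β), (∀ i, MeasurableSet (G i)) ∧ (∀ i, InjOn Prod.fst (G i)) ∧
      (∀ i, InjOn Prod.snd (G i)) ∧ Pairwise (Disjoint on G) ∧ ⋃ i, G i = P := by
  obtain ⟨G, hG, hGinj, hGdisj, hGP⟩ := exists_iUnion_disjoint_injOn_fst hP hfst
  obtain ⟨H, hH, hHinj, hHdisj, hHP⟩ :=
    exists_iUnion_disjoint_injOn_fst (measurable_swap hP) hsnd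
  refine ⟨fun i => G i.1 ∩ Prod.swap ⁻¹' H i.2,
    fun i => (hG i.1).inter (measurable_swap (hH i.2)),
    fun i => (hGinj i.1).mono inter_subset_left, fun i p hp q hq hpq => ?_,
    fun i j hij => ?_, ?_⟩
  · exact Prod.swap_injective (hHinj i.2 hp.2 hq.2 hpq)
  · rcases not_and_or.1 (mt Prod.ext_iff.2 hij) with h | h
    · exact (hGdisj h).mono inter_subset_left inter_subset_left
    · exact ((hHdisj h).preimage _).mono inter_subset_right inter_subset_right
  · have swap_P : Prod.swap ⁻¹' ⋃ m, H m = P := by rw [hHP, ← preimage_comp]; simp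
    rw [iUnion_prod', ← inter_self P]
    nth_rw 2 [← swap_P]
    simp_rw [← hGP, preimage_iUnion, inter_iUnion, iUnion_inter]
    exact iUnion_comm _

theorem exists_measurable_leftInvOn [Nonempty α] {γ : Type*} [MeasurableSpace γ]
    [MeasurableSpace.CountablySeparated γ] {f : α → γ} {s : Set α} (hf : Measurable f)
    (hs : MeasurableSet s) (hinj : InjOn f s) :
    ∃ g : γ → α, Measurable g ∧ LeftInvOn g f s := by
  have := hs.standardBorel
  obtain ⟨g, hg, hgf⟩ := ((hf.comp measurable_subtype_coe).measurableEmbedding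
    (injOn_iff_injective.1 hinj)).exists_measurable_extend measurable_subtype_coe
    fun _ => ‹Nonempty α›
  exact ⟨g, hg, fun x hx => congrFun hgf ⟨x, hx⟩⟩

theorem exists_measurable_of_injOn_fst [Nonempty β] {P : Set (α × β)} (hP : MeasurableSet P)
    (hinj : InjOn Prod.fst P) : ∃ θ : α → β, Measurable θ ∧ ∀ p ∈ P, θ p.1 = p.2 := by
  rcases isEmpty_or_nonempty α with _ | _
  · exact ⟨isEmptyElim, measurable_of_empty _, fun p => isEmptyElim p.1⟩
  · obtain ⟨g, hg, hgP⟩ := exists_measurable_leftInvOn measurable_fst hP hinj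
    exact ⟨fun x => (g x).2, measurable_snd.comp hg, fun p hp => congrArg Prod.snd (hgP hp)⟩

theorem measurable_tsum_of_finite_support {K : α → β → ℝ≥0∞}
    (hK : Measurable (Function.uncurry K)) (hfin : ∀ x, (Function.support (K x)).Finite) :
    Measurable fun x => ∑' y, K x y := by
  rcases isEmpty_or_nonempty β with _ | _
  · simp only [tsum_empty, measurable_const]
  obtain ⟨G, hG, hinj, hdisj, hGK⟩ :=
    exists_iUnion_disjoint_injOn_fst (P := Function.support (Function.uncurry K))
      (measurableSet_support hK) hfin
  choose θ hθ hθG using fun n => exists_measurable_of_injOn_fst (hG n) (hinj n)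
  have piece : ∀ n x, ∑' y, (G n).indicator (Function.uncurry K) (x, y) =
      (G n).indicator (Function.uncurry K) (x, θ n x) := fun n x =>
    tsum_eq_single _ fun y hy => indicator_of_notMem (fun h => hy (hθG n _ h).symm) _
  have decompose : ∀ x y, K x y = ∑' n, (G n).indicator (Function.uncurry K) (x, y) :=
    fun x y => by
      rw [← congrFun (indicator_iUnion_of_pairwise_disjoint G hdisj _) (x, y), hGK,
        indicator_support, Function.uncurry]
  simp_rw [decompose, ENNReal.tsum_comm (α := β), piece]
  exact .tsum fun n => (hK.indicator (hG n)).comp (measurable_id.prodMk (hθ n))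

end FiniteSections

section PartialInjections

variable [MeasurableSpace X] [StandardBorelSpace X]

theorem exists_measurableEquiv_swap {A : Set X} {T : X → X} (hA : MeasurableSet A)
    (hT : Measurable T) (hinj : InjOn T A) (hdisj : Disjoint A (T '' A)) :
    ∃ S : X ≃ᵐ X, (∀ x ∈ A, S x = T x) ∧ (∀ x ∈ A, S (T x) = x) ∧
      ∀ x ∉ A ∪ T '' A, S x = x := by
  classical
  rcases isEmpty_or_nonempty X with _ | _
  · exact ⟨.refl X, isEmptyElim, isEmptyElim, isEmptyElim⟩
  obtain ⟨T', hT', hleft⟩ := exists_measurable_leftInvOn hT hA hinj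
  have hTA := hA.image_of_measurable_injOn hT hinj
  let s : X → X := fun x => if x ∈ A then T x else if x ∈ T '' A then T' x else x
  have s_fwd : ∀ x ∈ A, s x = T x := fun x hx => if_pos hx
  have s_bwd : ∀ x ∈ A, s (T x) = x := fun x hx => by
    have hTx : T x ∉ A := hdisj.notMem_of_mem_right (mem_image_of_mem T hx)
    simp only [s, hTx, mem_image_of_mem T hx, if_true, if_false, hleft hx]
  have s_fix : ∀ x ∉ A ∪ T '' A, s x = x := fun x hx => by
    rw [mem_union, not_or] at hx
    simp only [s, hx.1, hx.2, if_false]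
  have s_inv : Function.Involutive s := fun x => by
    by_cases hx : x ∈ A ∪ T '' A
    · rcases hx with hx | ⟨x, hx, rfl⟩
      · rw [s_fwd x hx, s_bwd x hx]
      · rw [s_bwd x hx, s_fwd x hx]
    · rw [s_fix x hx, s_fix x hx]
  exact ⟨.ofInvolutive s s_inv (.ite hA hT (.ite hTA hT' measurable_id)), s_fwd, s_bwd, s_fix⟩

open scoped Function in
theorem exists_iUnion_disjoint_eqOn_id_or_disjoint_preimage {T : X → X} (hT : Measurable T) :
    ∃ S : ℕ → Set X, (∀ n, MeasurableSet (S n)) ∧ Pairwise (Disjoint on S) ∧ ⋃ n, S n = univ ∧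
      ∀ n, EqOn T id (S n) ∨ Disjoint (S n) (T ⁻¹' S n) := by
  let := upgradeStandardBorel X
  let V : Option (TopologicalSpace.countableBasis X) → Set X := fun i =>
    i.elim {x | T x = x} fun U => U \ T ⁻¹' U
  have V_measurable : ∀ i, MeasurableSet (V i) := by
    rintro (_ | U)
    · exact measurableSet_eq_fun hT measurable_id
    · have hU := (TopologicalSpace.isOpen_of_mem_countableBasis U.2).measurableSet
      exact hU.diff (hT hU)
  have V_cover : ⋃ i, V i = univ := eq_univ_of_forall fun x => by
    rcases eq_or_ne (T x) x with h | h
    · exact mem_iUnion.2 ⟨none, h⟩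
    · obtain ⟨U, hU, hxU, hsub⟩ :=
        (TopologicalSpace.isBasis_countableBasis X).exists_subset_of_mem_open
          (mem_compl_singleton_iff.2 h.symm) isOpen_compl_singleton
      exact mem_iUnion.2 ⟨some ⟨U, hU⟩, hxU, fun h => hsub h rfl⟩
  have V_dichotomy : ∀ i, EqOn T id (V i) ∨ Disjoint (V i) (T ⁻¹' V i) := by
    rintro (_ | U)
    · exact .inl fun x hx => hx
    · exact .inr (disjoint_left.2 fun x hx hTx => hx.2 hTx.1)
  obtain ⟨u, hu⟩ := exists_surjective_nat (Option (TopologicalSpace.countableBasis X))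
  have sub : ∀ n, disjointed (V ∘ u) n ⊆ V (u n) := disjointed_subset _
  refine ⟨disjointed (V ∘ u), .disjointed fun n => V_measurable (u n), disjoint_disjointed _,
    by rw [iUnion_disjointed, ← V_cover]; exact hu.iUnion_comp V, fun n => ?_⟩
  exact (V_dichotomy (u n)).imp (fun h => h.mono (sub n))
    fun h => h.mono (sub n) (preimage_mono (sub n))

end PartialInjections

section Invariance

open scoped Function

variable [MeasurableSpace X] {E : X → X → Prop} {ρ : X → X → ℝ} {B : Set X} {μ : Measure X}

/-- Invariance of `μ` with respect to the restriction of `ρ` to `E ↾ B`, tested on the Borel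
automorphisms of `B`, encoded as automorphisms of `X` which are the identity off `B`. -/
def IsInvariantOn (E : X → X → Prop) (ρ : X → X → ℝ) (B : Set X) (μ : Measure X) : Prop :=
  ∀ T : X ≃ᵐ X, (∀ x ∈ B, T x ∈ B ∧ E (T x) x) → (∀ x ∉ B, T x = x) →
    ∀ A : Set X, MeasurableSet A → A ⊆ B → μ (T '' A) = ∫⁻ x in A, ENNReal.ofReal (ρ (T x) x) ∂μ

theorem IsInvariantRel.lintegral_image {R : Set (X × X)} (hμ : IsInvariantRel R ρ μ)
    (hρ : Measurable (Function.uncurry ρ)) {A : Set X} {T : X → X} (hA : MeasurableSet A)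
    (hT : Measurable T) (hinj : InjOn T A) (hR : ∀ x ∈ A, (T x, x) ∈ R) {f : X → ℝ≥0∞}
    (hf : Measurable f) :
    ∫⁻ y in T '' A, f y ∂μ = ∫⁻ x in A, f (T x) * ENNReal.ofReal (ρ (T x) x) ∂μ := by
  have hρT : Measurable fun x => ENNReal.ofReal (ρ (T x) x) :=
    (hρ.comp (hT.prodMk measurable_id)).ennreal_ofReal
  have restrict_image : μ.restrict (T '' A) =
      ((μ.restrict A).withDensity fun x => ENNReal.ofReal (ρ (T x) x)).map T := by
    ext S hS
    rw [Measure.restrict_apply hS, Measure.map_apply hT hS, withDensity_apply _ (hT hS),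
      Measure.restrict_restrict (hT hS), inter_comm, ← image_inter_preimage, inter_comm A]
    exact hμ _ _ ((hT hS).inter hA) hT (hinj.mono inter_subset_right) fun x hx => hR x hx.2
  rw [restrict_image, lintegral_map hf hT,
    lintegral_withDensity_eq_lintegral_mul _ hρT (g := fun x => f (T x)) (hf.comp hT)]
  exact lintegral_congr fun x => mul_comm _ _

variable [StandardBorelSpace X]

theorem IsInvariantOn.measure_image_of_disjoint (hμ : IsInvariantOn E ρ B μ) (hE : Equivalence E)
    {A : Set X} {T : X → X} (hA : MeasurableSet A) (hT : Measurable T) (hinj : InjOn T A)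
    (hAB : A ⊆ B) (hTB : MapsTo T A B) (hET : ∀ x ∈ A, E (T x) x) (hdisj : Disjoint A (T '' A)) :
    μ (T '' A) = ∫⁻ x in A, ENNReal.ofReal (ρ (T x) x) ∂μ := by
  obtain ⟨S, S_fwd, S_bwd, S_fix⟩ := exists_measurableEquiv_swap hA hT hinj hdisj
  have S_mem : ∀ x ∈ B, S x ∈ B ∧ E (S x) x := fun x hx => by
    by_cases hxA : x ∈ A ∪ T '' A
    · rcases hxA with hxA | ⟨x, hxA, rfl⟩
      · exact S_fwd x hxA ▸ ⟨hTB hxA, hET x hxA⟩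
      · exact (S_bwd x hxA).symm ▸ ⟨hAB hxA, hE.symm (hET x hxA)⟩
    · exact (S_fix x hxA).symm ▸ ⟨hx, hE.refl x⟩
  have S_off : ∀ x ∉ B, S x = x := fun x hx =>
    S_fix x fun h => hx (union_subset hAB hTB.image_subset h)
  rw [← image_congr S_fwd, hμ S S_mem S_off A hA hAB]
  exact setLIntegral_congr_fun hA fun x hx => by rw [S_fwd x hx]

theorem IsInvariantOn.isInvariantRel (hμ : IsInvariantOn E ρ B μ) (hE : Equivalence E)
    (hρ : ∀ x, ρ x x = 1) :
    IsInvariantRel {p | p.1 ∈ B ∧ p.2 ∈ B ∧ E p.1 p.2} ρ μ := by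
  intro A T hA hT hinj hR
  obtain ⟨S, hS, S_disj, S_cover, S_dichotomy⟩ :=
    exists_iUnion_disjoint_eqOn_id_or_disjoint_preimage hT
  have hAS : ∀ n, MeasurableSet (A ∩ S n) := fun n => hA.inter (hS n)
  have AS_disj : Pairwise (Disjoint on fun n => A ∩ S n) := fun m n h =>
    (S_disj h).mono inter_subset_right inter_subset_right
  have piece : ∀ n, μ (T '' (A ∩ S n)) = ∫⁻ x in A ∩ S n, ENNReal.ofReal (ρ (T x) x) ∂μ := by
    intro n
    rcases S_dichotomy n with hid | hdisj
    · rw [image_congr fun x hx => hid hx.2, image_id, ← setLIntegral_one]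
      refine setLIntegral_congr_fun (hAS n) fun x hx => ?_
      simp only [hid hx.2, id_eq, hρ, ENNReal.ofReal_one]
    · refine hμ.measure_image_of_disjoint hE (hAS n) hT (hinj.mono inter_subset_left)
        (fun x hx => (hR x hx.1).2.1) (fun x hx => (hR x hx.1).1) (fun x hx => (hR x hx.1).2.2) ?_
      exact disjoint_image_right.2
        (hdisj.symm.mono (preimage_mono inter_subset_right) inter_subset_right)
  rw [← inter_univ A, ← S_cover, inter_iUnion, image_iUnion, lintegral_iUnion hAS AS_disj,
    measure_iUnion (fun m n h => ?_)
      fun n => (hAS n).image_of_measurable_injOn hT (hinj.mono inter_subset_left)]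
  · exact tsum_congr piece
  · exact disjoint_image_image fun x hx y hy hxy =>
      (AS_disj h).ne_of_mem hx hy (hinj hx.1 hy.1 hxy)

theorem IsInvariantRel.mass_transport_of_injOn {R : Set (X × X)} (hμ : IsInvariantRel R ρ μ)
    (hρ : Measurable (Function.uncurry ρ)) {K : X → X → ℝ≥0∞}
    (hK : Measurable (Function.uncurry K))
    (hfst : InjOn Prod.fst (Function.support (Function.uncurry K)))
    (hsnd : InjOn Prod.snd (Function.support (Function.uncurry K)))
    (hR : ∀ x y, K x y ≠ 0 → (y, x) ∈ R) :
    ∫⁻ x, ∑' y, K x y * ENNReal.ofReal (ρ y x) ∂μ = ∫⁻ y, ∑' x, K x y ∂μ := by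
  rcases isEmpty_or_nonempty X with _ | _
  · simp only [lintegral_of_isEmpty]
  obtain ⟨θ, hθ, hθK⟩ := exists_measurable_of_injOn_fst (measurableSet_support hK) hfst
  have out_eq : ∀ x y, y ≠ θ x → K x y = 0 := fun x y hy =>
    of_not_not fun h => hy (hθK (x, y) h).symm
  have in_eq : ∀ x y z, K x y ≠ 0 → z ≠ x → K z y = 0 := fun x y z hxy hz =>
    of_not_not fun h => hz (congrArg Prod.fst (hsnd (x₁ := (z, y)) h (x₂ := (x, y)) hxy rfl))
  set D := {x | K x (θ x) ≠ 0}
  have hD : MeasurableSet D := measurableSet_support (hK.comp (measurable_id.prodMk hθ))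
  have hθD : InjOn θ D := fun x hx x' hx' h =>
    of_not_not fun hne => hx' (in_eq x (θ x') x' (h ▸ hx) (Ne.symm hne))
  have off_image : ∀ y ∉ θ '' D, ∑' x, K x y = 0 := fun y hy => ENNReal.tsum_eq_zero.2 fun x => by
    by_contra h
    obtain rfl : y = θ x := of_not_not fun hne => h (out_eq x y hne)
    exact hy ⟨x, h, rfl⟩
  have hsum : Measurable fun y => ∑' x, K x y :=
    measurable_tsum_of_finite_support (hK.comp measurable_swap) fun y =>
      Set.Subsingleton.finite fun x hx x' hx' =>
        of_not_not fun h => hx' (in_eq x y x' hx (Ne.symm h))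
  calc ∫⁻ x, ∑' y, K x y * ENNReal.ofReal (ρ y x) ∂μ
      = ∫⁻ x, K x (θ x) * ENNReal.ofReal (ρ (θ x) x) ∂μ := lintegral_congr fun x =>
        tsum_eq_single _ fun y hy => by rw [out_eq x y hy, zero_mul]
    _ = ∫⁻ x in D, K x (θ x) * ENNReal.ofReal (ρ (θ x) x) ∂μ :=
        (setLIntegral_eq_of_support_subset fun x hx => left_ne_zero_of_mul hx).symm
    _ = ∫⁻ x in D, (∑' z, K z (θ x)) * ENNReal.ofReal (ρ (θ x) x) ∂μ :=
        setLIntegral_congr_fun hD fun x hx => by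
          rw [tsum_eq_single x fun z hz => in_eq x (θ x) z hx hz]
    _ = ∫⁻ y in θ '' D, ∑' x, K x y ∂μ :=
        (hμ.lintegral_image hρ hD hθ hθD (fun x hx => hR x (θ x) hx) hsum).symm
    _ = ∫⁻ y, ∑' x, K x y ∂μ :=
        setLIntegral_eq_of_support_subset fun y hy => of_not_not fun h => hy (off_image y h)

theorem IsInvariantRel.mass_transport {R : Set (X × X)} (hμ : IsInvariantRel R ρ μ)
    (hρ : Measurable (Function.uncurry ρ)) {K : X → X → ℝ≥0∞}
    (hK : Measurable (Function.uncurry K)) (hfst : ∀ x, (Function.support (K x)).Finite)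
    (hsnd : ∀ y, (Function.support fun x => K x y).Finite)
    (hR : ∀ x y, K x y ≠ 0 → (y, x) ∈ R) :
    ∫⁻ x, ∑' y, K x y * ENNReal.ofReal (ρ y x) ∂μ = ∫⁻ y, ∑' x, K x y ∂μ := by
  obtain ⟨G, hG, hGfst, hGsnd, hdisj, hGK⟩ := exists_iUnion_disjoint_injOn_fst_injOn_snd
    (P := Function.support (Function.uncurry K)) (measurableSet_support hK) hfst hsnd
  let L : ℕ × ℕ → X → X → ℝ≥0∞ := fun i => Function.curry ((G i).indicator (Function.uncurry K))
  have hL : ∀ i, Measurable (Function.uncurry (L i)) := fun i => hK.indicator (hG i)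
  have L_support : ∀ i, Function.support (Function.uncurry (L i)) ⊆ G i := fun i =>
    support_indicator_subset
  have L_ne : ∀ i x y, L i x y ≠ 0 → K x y ≠ 0 := fun i x y h =>
    (support_indicator.subset (show (x, y) ∈ Function.support (Function.uncurry (L i)) from h)).2
  have K_eq : ∀ x y, K x y = ∑' i, L i x y := fun x y => by
    have := congrFun (indicator_iUnion_of_pairwise_disjoint G hdisj (Function.uncurry K)) (x, y)
    rwa [hGK, indicator_support] at this
  have out_measurable : ∀ i, Measurable fun x => ∑' y, L i x y * ENNReal.ofReal (ρ y x) :=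
    fun i => measurable_tsum_of_finite_support
      ((hL i).mul (hρ.comp measurable_swap).ennreal_ofReal) fun x =>
        (hfst x).subset fun y hy => L_ne i x y (left_ne_zero_of_mul hy)
  have in_measurable : ∀ i, Measurable fun y => ∑' x, L i x y := fun i =>
    measurable_tsum_of_finite_support ((hL i).comp measurable_swap) fun y =>
      (hsnd y).subset fun x hx => L_ne i x y hx
  have transport : ∀ i,
      ∫⁻ x, ∑' y, L i x y * ENNReal.ofReal (ρ y x) ∂μ = ∫⁻ y, ∑' x, L i x y ∂μ := fun i =>
    hμ.mass_transport_of_injOn hρ (hL i) ((hGfst i).mono (L_support i))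
      ((hGsnd i).mono (L_support i)) fun x y h => hR x y (L_ne i x y h)
  simp_rw [K_eq, ← ENNReal.tsum_mul_right, ENNReal.tsum_comm (β := ℕ × ℕ)]
  rw [lintegral_tsum fun i => (out_measurable i).aemeasurable,
    lintegral_tsum fun i => (in_measurable i).aemeasurable, tsum_congr transport]

end Invariance

section Cocycle

theorem eSize_ne_top {ρ : X → X → ℝ} {Y : Set X} (hY : Y.Finite) (z : X) : eSize ρ Y z ≠ ∞ := by
  have := hY.fintype
  rw [eSize, tsum_fintype]
  exact ENNReal.sum_ne_top.2 fun y _ => ENNReal.ofReal_ne_top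

variable [MeasurableSpace X] {E : X → X → Prop} {ρ : X → X → ℝ}

theorem IsCocycle.apply_self (hρ : IsCocycle E ρ) (hE : Equivalence E) (x : X) : ρ x x = 1 :=
  (mul_eq_left₀ (hρ.2.1 (hE.refl x)).ne').1 (hρ.2.2 (hE.refl x) (hE.refl x)).symm

theorem IsCocycle.ofReal_mul_ofReal (hρ : IsCocycle E ρ) {x y z : X} (hxy : E x y) (hyz : E y z) :
    ENNReal.ofReal (ρ x y) * ENNReal.ofReal (ρ y z) = ENNReal.ofReal (ρ x z) := by
  rw [hρ.2.2 hxy hyz, ENNReal.ofReal_mul (hρ.2.1 hxy).le]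

theorem IsCocycle.ofReal_ne_zero (hρ : IsCocycle E ρ) {x y : X} (hxy : E x y) :
    ENNReal.ofReal (ρ x y) ≠ 0 :=
  (ENNReal.ofReal_pos.2 (hρ.2.1 hxy)).ne'

theorem IsCocycle.eSize_mul (hρ : IsCocycle E ρ) {Y : Set X} {x y : X} (hY : ∀ z ∈ Y, E z x)
    (hxy : E x y) : eSize ρ Y x * ENNReal.ofReal (ρ x y) = eSize ρ Y y := by
  rw [eSize, ← ENNReal.tsum_mul_right]
  exact tsum_congr fun z => hρ.ofReal_mul_ofReal (hY z z.2) hxy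

theorem IsFinSubequivOn.isFinSubequiv {F : X → X → Prop} (hF : IsFinSubequivOn E univ F)
    (hE : Equivalence E) : IsFinSubequiv E F :=
  ⟨hF.1, hF.2.1, fun x _ h => (hF.2.2.1 h).elim (fun h => h ▸ hE.refl x) And.left, hF.2.2.2⟩

theorem IsFinSubequiv.finite_class {F : X → X → Prop} (hF : IsFinSubequiv E F) (x : X) :
    {y | F y x}.Finite :=
  (hF.2.2.2 x).subset fun _ => hF.1.symm

theorem IsFinSubequiv.measurable_eSize [StandardBorelSpace X] {F : X → X → Prop}
    (hF : IsFinSubequiv E F) (hρ : IsCocycle E ρ) {B : Set X} (hB : MeasurableSet B) :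
    Measurable fun x => eSize ρ (B ∩ {z | F z x}) x := by
  have eSize_eq : ∀ x, eSize ρ (B ∩ {z | F z x}) x =
      ∑' y, (B ∩ {z | F z x}).indicator (fun y => ENNReal.ofReal (ρ y x)) y := fun x =>
    tsum_subtype _ fun y => ENNReal.ofReal (ρ y x)
  simp only [eSize_eq]
  refine measurable_tsum_of_finite_support
    (K := fun x => (B ∩ {z | F z x}).indicator fun y => ENNReal.ofReal (ρ y x)) ?_ fun x =>
      (hF.finite_class x).subset fun y hy => (mem_of_indicator_ne_zero hy).2
  exact (hρ.1.comp measurable_swap).ennreal_ofReal.indicator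
    ((measurable_snd hB).inter (measurable_swap hF.2.1))

end Cocycle

section Spread

variable [MeasurableSpace X] {E : X → X → Prop} {ρ : X → X → ℝ} {w : X → X → ℝ≥0∞}
  {B : Set X} {μ : Measure X}

/-- The mass distribution in which a unit mass at `x` puts the mass `w x y` at `y`, integrated
against `μ`. -/
noncomputable def spread (μ : Measure X) (w : X → X → ℝ≥0∞) : Measure X :=
  μ.bind fun x => Measure.sum fun y => w x y • Measure.dirac y

/-- Finitely supported Borel weights on `E` satisfying the detailed balance equations
`ρ(x, z) w(x, y) = ρ(y, z) w(y, x)` with respect to the density `ρ(·, z)`. Dividing by `ρ(y, z)`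
gives the form of `balance`, in which the base point `z` does not occur. -/
structure IsReversibleWeight (E : X → X → Prop) (ρ : X → X → ℝ) (w : X → X → ℝ≥0∞) : Prop where
  measurable : Measurable (Function.uncurry w)
  finite_support : ∀ x, (Function.support (w x)).Finite
  rel : ∀ {x y}, w x y ≠ 0 → E x y
  balance : ∀ x y, w x y * ENNReal.ofReal (ρ x y) = w y x

namespace IsReversibleWeight

theorem ne_zero_symm (hw : IsReversibleWeight E ρ w) {x y : X} (h : w x y ≠ 0) : w y x ≠ 0 :=
  left_ne_zero_of_mul (hw.balance y x ▸ h)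

theorem finite_support_flip (hw : IsReversibleWeight E ρ w) (y : X) :
    (Function.support fun x => w x y).Finite :=
  (hw.finite_support y).subset fun _ h => hw.ne_zero_symm h

theorem balance_trans (hw : IsReversibleWeight E ρ w) (hE : Equivalence E) (hρ : IsCocycle E ρ)
    {u v : X} (huv : E u v) (x z : X) :
    w z v * ENNReal.ofReal (ρ u v) * w u x * ENNReal.ofReal (ρ z x) = w x u * w v z := by
  rw [← hw.balance u x, ← hw.balance z v]
  by_cases hzv : w z v = 0
  · simp only [hzv, zero_mul, mul_zero]
  by_cases hux : w u x = 0
  · simp only [hux, zero_mul, mul_zero]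
  have hvx : E v x := hE.trans (hE.symm huv) (hw.rel hux)
  rw [← hρ.ofReal_mul_ofReal huv hvx, ← hρ.ofReal_mul_ofReal (hw.rel hzv) hvx]
  ring

variable [StandardBorelSpace X]

theorem lintegral_spread (hw : IsReversibleWeight E ρ w) {f : X → ℝ≥0∞} (hf : Measurable f) :
    ∫⁻ y, f y ∂spread μ w = ∫⁻ x, ∑' y, w x y * f y ∂μ := by
  have lintegral_sum : ∀ x (g : X → ℝ≥0∞), ∫⁻ y, g y ∂(Measure.sum fun y =>
      w x y • Measure.dirac y) = ∑' y, w x y * g y := fun x g => by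
    simp only [lintegral_sum_measure, lintegral_smul_measure, lintegral_dirac, smul_eq_mul]
  have measurable_sum : Measurable fun x => Measure.sum fun y => w x y • Measure.dirac y := by
    refine Measure.measurable_of_measurable_coe _ fun A hA => ?_
    simp only [← lintegral_indicator_one hA, lintegral_sum]
    exact measurable_tsum_of_finite_support
      (hw.measurable.mul ((measurable_one.indicator hA).comp measurable_snd)) fun x =>
        (hw.finite_support x).subset fun y hy => left_ne_zero_of_mul hy
  rw [spread, Measure.lintegral_bind measurable_sum.aemeasurable hf.aemeasurable]
  exact lintegral_congr fun x => lintegral_sum x f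

theorem spread_univ_le (hw : IsReversibleWeight E ρ w) {C : ℝ≥0∞} (hC : ∀ x, ∑' y, w x y ≤ C) :
    spread μ w univ ≤ C * μ univ := by
  rw [← lintegral_one, hw.lintegral_spread measurable_const, ← lintegral_const]
  exact lintegral_mono fun x => by simpa only [mul_one] using hC x

theorem restrict_spread (hw : IsReversibleWeight E ρ w)
    (hρ : Measurable (Function.uncurry ρ)) (hB : MeasurableSet B)
    (hw_one : ∀ x, ∑' y, w x y * B.indicator 1 y = 1)
    (hμ : IsInvariantRel {p | p.1 ∈ B ∧ p.2 ∈ B ∧ E p.1 p.2} ρ μ) (hμB : ∀ᵐ x ∂μ, x ∈ B) :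
    (spread μ w).restrict B = μ := by
  ext A hA
  have hAB := hA.inter hB
  let K : X → X → ℝ≥0∞ := fun x y => w y x * B.indicator 1 x * (A ∩ B).indicator 1 y
  have w_ne : ∀ {x y}, K x y ≠ 0 → w y x ≠ 0 := fun h =>
    left_ne_zero_of_mul (left_ne_zero_of_mul h)
  have hK : Measurable (Function.uncurry K) :=
    ((hw.measurable.comp measurable_swap).mul
      ((measurable_one.indicator hB).comp measurable_fst)).mul
      ((measurable_one.indicator hAB).comp measurable_snd)
  have K_rel : ∀ x y, K x y ≠ 0 → y ∈ B ∧ x ∈ B ∧ E y x := fun x y h =>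
    ⟨(mem_of_indicator_ne_zero (right_ne_zero_of_mul h)).2,
      mem_of_indicator_ne_zero (right_ne_zero_of_mul (left_ne_zero_of_mul h)), hw.rel (w_ne h)⟩
  calc (spread μ w).restrict B A
      = ∫⁻ x, ∑' y, w x y * (A ∩ B).indicator 1 y ∂μ := by
        rw [Measure.restrict_apply hA, ← lintegral_indicator_one hAB,
          hw.lintegral_spread (measurable_one.indicator hAB)]
    _ = ∫⁻ x, ∑' y, K x y * ENNReal.ofReal (ρ y x) ∂μ := by
        refine lintegral_congr_ae (hμB.mono fun x hx => tsum_congr fun y => ?_)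
        rw [← hw.balance y x]
        simp only [K, indicator_of_mem hx, Pi.one_apply]
        ring
    _ = ∫⁻ y, ∑' x, K x y ∂μ := hμ.mass_transport hρ hK
        (fun x => (hw.finite_support_flip x).subset fun y h => w_ne h)
        (fun y => (hw.finite_support y).subset fun x h => w_ne h) K_rel
    _ = ∫⁻ y, (A ∩ B).indicator 1 y ∂μ :=
        lintegral_congr fun y => by rw [ENNReal.tsum_mul_right, hw_one, one_mul]
    _ = μ A := by
        rw [lintegral_indicator_one hAB, inter_comm, Measure.measure_inter_eq_of_ae hμB]

end IsReversibleWeight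

end Spread

section Conjugation

variable {ρ : X → X → ℝ} {w : X → X → ℝ≥0∞} {m : X → ℝ≥0∞} {A B : Set X}

/-- The mass received at `x` when a unit mass at `z` is spread by `w`, each part arriving at `v` is
moved to `T v` and scaled by `m v`, and the result is spread by `w` again. Only points `x`, `z` of
`B` exchange mass. -/
noncomputable def conjKernel (w : X → X → ℝ≥0∞) (T : X → X) (m : X → ℝ≥0∞) (B : Set X) (x z : X) :
    ℝ≥0∞ :=
  B.indicator 1 x * B.indicator 1 z * ∑' v, w z v * m v * w (T v) x

theorem exists_of_conjKernel_ne_zero {T : X → X} {x z : X} (h : conjKernel w T m B x z ≠ 0) :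
    x ∈ B ∧ z ∈ B ∧ ∃ v, w z v ≠ 0 ∧ w (T v) x ≠ 0 := by
  have hsum := mt ENNReal.tsum_eq_zero.2 (right_ne_zero_of_mul h)
  obtain ⟨v, hv⟩ := not_forall.1 hsum
  exact ⟨mem_of_indicator_ne_zero (left_ne_zero_of_mul (left_ne_zero_of_mul h)),
    mem_of_indicator_ne_zero (right_ne_zero_of_mul (left_ne_zero_of_mul h)),
    v, left_ne_zero_of_mul (left_ne_zero_of_mul hv), right_ne_zero_of_mul hv⟩

theorem tsum_conjKernel (hw_one : ∀ x, ∑' y, w x y * B.indicator 1 y = 1) {T : X → X} {z : X}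
    (hz : z ∈ B) : ∑' x, conjKernel w T m B x z = ∑' v, w z v * m v := by
  have summand : ∀ x v, B.indicator 1 x * (w z v * m v * w (T v) x) =
      w z v * m v * (w (T v) x * B.indicator 1 x) := fun x v => by ring
  simp only [conjKernel, indicator_of_mem hz, Pi.one_apply, mul_one, ← ENNReal.tsum_mul_left,
    summand]
  rw [ENNReal.tsum_comm]
  simp only [ENNReal.tsum_mul_left, hw_one, mul_one]

variable [MeasurableSpace X] {E : X → X → Prop} {T : X ≃ᵐ X} {μ : Measure X}

namespace IsReversibleWeight

theorem finite_support_conjKernel (hw : IsReversibleWeight E ρ w) (x : X) :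
    (Function.support (conjKernel w T m B x)).Finite := by
  refine (((hw.finite_support x).preimage T.injective.injOn).biUnion fun v _ =>
    hw.finite_support v).subset fun z hz => ?_
  obtain ⟨-, -, v, hzv, hvx⟩ := exists_of_conjKernel_ne_zero hz
  exact mem_biUnion (hw.ne_zero_symm hvx) (hw.ne_zero_symm hzv)

theorem finite_support_conjKernel_flip (hw : IsReversibleWeight E ρ w) (z : X) :
    (Function.support fun x => conjKernel w T m B x z).Finite := by
  refine ((hw.finite_support z).biUnion fun v _ => hw.finite_support (T v)).subset fun x hx => ?_
  obtain ⟨-, -, v, hzv, hvx⟩ := exists_of_conjKernel_ne_zero hx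
  exact mem_biUnion hzv hvx

theorem rel_of_conjKernel_ne_zero (hw : IsReversibleWeight E ρ w) (hE : Equivalence E)
    (hT : ∀ x, E (T x) x) {x z : X} (h : conjKernel w T m B x z ≠ 0) :
    z ∈ B ∧ x ∈ B ∧ E z x := by
  obtain ⟨hx, hz, v, hzv, hvx⟩ := exists_of_conjKernel_ne_zero h
  exact ⟨hz, hx, hE.trans (hw.rel hzv) (hE.trans (hE.symm (hT v)) (hw.rel hvx))⟩

theorem measurable_conjKernel [StandardBorelSpace X] (hw : IsReversibleWeight E ρ w)
    (hm : Measurable m) (hB : MeasurableSet B) :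
    Measurable (Function.uncurry (conjKernel w T m B)) := by
  have hwm : Measurable fun q : (X × X) × X => w q.1.2 q.2 * m q.2 :=
    (hw.measurable.comp ((measurable_snd.comp measurable_fst).prodMk measurable_snd)).mul
      (hm.comp measurable_snd)
  have hwT : Measurable fun q : (X × X) × X => w (T q.2) q.1.1 :=
    hw.measurable.comp
      ((T.measurable.comp measurable_snd).prodMk (measurable_fst.comp measurable_fst))
  refine .mul (.mul ((measurable_one.indicator hB).comp measurable_fst)
    ((measurable_one.indicator hB).comp measurable_snd)) ?_
  exact measurable_tsum_of_finite_support (hwm.mul hwT) fun p =>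
    (hw.finite_support p.2).subset fun v hv => left_ne_zero_of_mul (left_ne_zero_of_mul hv)

theorem tsum_conjKernel_mul (hw : IsReversibleWeight E ρ w) (hE : Equivalence E)
    (hρ : IsCocycle E ρ) (hw_one : ∀ x, ∑' y, w x y * B.indicator 1 y = 1)
    (hT : ∀ x, E (T x) x) {x : X} (hx : x ∈ B) :
    ∑' z, conjKernel w T (A.indicator fun v => ENNReal.ofReal (ρ (T v) v)) B x z *
        ENNReal.ofReal (ρ z x) =
      ∑' y, w x y * (T '' A).indicator 1 y := by
  have summand : ∀ z v, B.indicator 1 z *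
      (w z v * A.indicator (fun v => ENNReal.ofReal (ρ (T v) v)) v * w (T v) x) *
        ENNReal.ofReal (ρ z x) =
      w x (T v) * (T '' A).indicator 1 (T v) * (w v z * B.indicator 1 z) := fun z v => by
    by_cases hv : v ∈ A
    · simp only [indicator_of_mem hv, indicator_of_mem (mem_image_of_mem T hv), Pi.one_apply]
      rw [mul_one, ← mul_assoc (w x (T v)), ← hw.balance_trans hE hρ (hT v) x z]
      ring
    · have hTv : T v ∉ T '' A := fun h => hv (T.injective.mem_set_image.1 h)
      simp only [indicator_of_notMem hv, indicator_of_notMem hTv, mul_zero, zero_mul]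
  calc ∑' z, conjKernel w T (A.indicator fun v => ENNReal.ofReal (ρ (T v) v)) B x z *
        ENNReal.ofReal (ρ z x)
      = ∑' z, ∑' v, w x (T v) * (T '' A).indicator 1 (T v) * (w v z * B.indicator 1 z) := by
        simp only [conjKernel, indicator_of_mem hx, Pi.one_apply, one_mul,
          ← ENNReal.tsum_mul_left, ← ENNReal.tsum_mul_right, summand]
    _ = ∑' v, w x (T v) * (T '' A).indicator 1 (T v) := by
        rw [ENNReal.tsum_comm]
        simp only [ENNReal.tsum_mul_left, hw_one, mul_one]
    _ = ∑' y, w x y * (T '' A).indicator 1 y :=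
        T.toEquiv.tsum_eq fun y => w x y * (T '' A).indicator 1 y

theorem isInvariant_spread [StandardBorelSpace X] (hw : IsReversibleWeight E ρ w)
    (hE : Equivalence E) (hρ : IsCocycle E ρ) (hB : MeasurableSet B)
    (hw_one : ∀ x, ∑' y, w x y * B.indicator 1 y = 1)
    (hμ : IsInvariantRel {p | p.1 ∈ B ∧ p.2 ∈ B ∧ E p.1 p.2} ρ μ) (hμB : ∀ᵐ x ∂μ, x ∈ B) :
    IsInvariant E ρ (spread μ w) := by
  intro T hT A hA
  have hTA := T.measurableSet_image.2 hA
  let m : X → ℝ≥0∞ := A.indicator fun v => ENNReal.ofReal (ρ (T v) v)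
  have hm : Measurable m :=
    (hρ.1.comp (T.measurable.prodMk measurable_id)).ennreal_ofReal.indicator hA
  calc spread μ w (T '' A)
      = ∫⁻ x, ∑' y, w x y * (T '' A).indicator 1 y ∂μ := by
        rw [← lintegral_indicator_one hTA, hw.lintegral_spread (measurable_one.indicator hTA)]
    _ = ∫⁻ x, ∑' z, conjKernel w T m B x z * ENNReal.ofReal (ρ z x) ∂μ :=
        lintegral_congr_ae (hμB.mono fun x hx =>
          (hw.tsum_conjKernel_mul hE hρ hw_one hT hx).symm)
    _ = ∫⁻ z, ∑' x, conjKernel w T m B x z ∂μ :=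
        hμ.mass_transport hρ.1 (hw.measurable_conjKernel hm hB)
          hw.finite_support_conjKernel hw.finite_support_conjKernel_flip
          fun x z => hw.rel_of_conjKernel_ne_zero hE hT
    _ = ∫⁻ z, ∑' v, w z v * m v ∂μ :=
        lintegral_congr_ae (hμB.mono fun z hz => tsum_conjKernel hw_one hz)
    _ = ∫⁻ v in A, ENNReal.ofReal (ρ (T v) v) ∂spread μ w := by
        rw [← hw.lintegral_spread hm, lintegral_indicator hA]

end IsReversibleWeight

end Conjugation

section ClassWeight

variable {E F : X → X → Prop} {ρ : X → X → ℝ} {B : Set X}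

/-- The `ρ`-size of `{y}` relative to `B ∩ [x]_F` for `y ∈ [x]_F`, and `0` for other `y`. -/
noncomputable def classWeight (ρ : X → X → ℝ) (F : X → X → Prop) (B : Set X) (x y : X) : ℝ≥0∞ :=
  {z | F z x}.indicator (fun z => ENNReal.ofReal (ρ z x)) y / eSize ρ (B ∩ {z | F z x}) x

theorem classWeight_of_rel {x y : X} (h : F y x) :
    classWeight ρ F B x y = ENNReal.ofReal (ρ y x) / eSize ρ (B ∩ {z | F z x}) x := by
  rw [classWeight, indicator_of_mem (show y ∈ {z | F z x} from h)]

theorem classWeight_of_not_rel {x y : X} (h : ¬ F y x) : classWeight ρ F B x y = 0 := by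
  rw [classWeight, indicator_of_notMem (show y ∉ {z | F z x} from h), ENNReal.zero_div]

theorem tsum_classWeight_mul_indicator (A : Set X) (x : X) :
    ∑' y, classWeight ρ F B x y * A.indicator 1 y =
      relSize ρ (A ∩ {z | F z x}) (B ∩ {z | F z x}) x := by
  rw [relSize, eSize, tsum_subtype _ fun y => ENNReal.ofReal (ρ y x), div_eq_mul_inv,
    ← ENNReal.tsum_mul_right]
  refine tsum_congr fun y => ?_
  rw [classWeight, div_eq_mul_inv, mul_right_comm, inter_comm A, ← inter_indicator_mul]
  simp only [Pi.one_apply, mul_one]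

theorem tsum_classWeight {x : X} (hfin : {z | F z x}.Finite)
    (hsize : eSize ρ (B ∩ {z | F z x}) x ≠ 0) :
    ∑' y, classWeight ρ F B x y = (relSize ρ (B ∩ {z | F z x}) {z | F z x} x)⁻¹ := by
  have h := tsum_classWeight_mul_indicator (ρ := ρ) (F := F) (B := B) univ x
  simp only [indicator_univ, Pi.one_apply, mul_one, univ_inter] at h
  rw [h, relSize, relSize, ENNReal.inv_div (.inl (eSize_ne_top hfin x)) (.inr hsize)]

variable [MeasurableSpace X]

theorem classWeight_balance (hE : Equivalence E) (hF : IsFinSubequiv E F) (hρ : IsCocycle E ρ)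
    (x y : X) :
    classWeight ρ F B x y * ENNReal.ofReal (ρ x y) = classWeight ρ F B y x := by
  by_cases hyx : F y x
  · have hxy := hF.1.symm hyx
    have hρxy := hρ.ofReal_ne_zero (hF.2.2.1 hxy)
    have hclass : {z | F z y} = {z | F z x} := ext fun z =>
      ⟨fun h => hF.1.trans h hyx, fun h => hF.1.trans h hxy⟩
    have hyx_xy : ENNReal.ofReal (ρ y x) * ENNReal.ofReal (ρ x y) = 1 := by
      rw [hρ.ofReal_mul_ofReal (hF.2.2.1 hyx) (hF.2.2.1 hxy), hρ.apply_self hE,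
        ENNReal.ofReal_one]
    rw [classWeight_of_rel hyx, classWeight_of_rel hxy, hclass,
      ← hρ.eSize_mul (fun z hz => hF.2.2.1 hz.2) (hF.2.2.1 hxy), ← ENNReal.mul_div_right_comm,
      hyx_xy, ← ENNReal.mul_div_mul_right 1 _ hρxy ENNReal.ofReal_ne_top, one_mul]
  · rw [classWeight_of_not_rel hyx, classWeight_of_not_rel (mt hF.1.symm hyx), zero_mul]

theorem isReversibleWeight_classWeight [StandardBorelSpace X] (hE : Equivalence E)
    (hF : IsFinSubequiv E F) (hρ : IsCocycle E ρ) (hB : MeasurableSet B) :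
    IsReversibleWeight E ρ (classWeight ρ F B) where
  measurable := .div ((hρ.1.comp measurable_swap).ennreal_ofReal.indicator
    (measurable_swap hF.2.1)) ((hF.measurable_eSize hρ hB).comp measurable_fst)
  finite_support x := (hF.finite_class x).subset fun _ hy =>
    of_not_not fun h => hy (classWeight_of_not_rel h)
  rel {_ _} hxy := hF.2.2.1 (hF.1.symm (of_not_not fun h => hxy (classWeight_of_not_rel h)))
  balance := classWeight_balance hE hF hρ

end ClassWeight

theorem stmt16_general [MeasurableSpace X] [StandardBorelSpace X] {E : X → X → Prop}
    (hE : Equivalence E) {ρ : X → X → ℝ} (hρ : IsCocycle E ρ) {B : Set X} (hB : MeasurableSet B)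
    {ε : ℝ} (hε : 0 < ε) (hdens : HasDensityAtLeastOn E ρ B univ ε) {μ : Measure X}
    (hsupp : μ Bᶜ = 0) (hμ : IsInvariantOn E ρ B μ) :
    ∃ ν : Measure X, ν univ ≤ (ENNReal.ofReal ε)⁻¹ * μ univ ∧ IsInvariant E ρ ν ∧
      ν.restrict B = μ := by
  obtain ⟨F, hFE, hF_dens⟩ := hdens
  have hF := hFE.isFinSubequiv hE
  have hw := isReversibleWeight_classWeight hE hF hρ hB
  have hsize : ∀ x, eSize ρ (B ∩ {z | F z x}) x ≠ 0 := fun x h => by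
    have := hF_dens x (mem_univ x)
    rw [relSize, h, ENNReal.zero_div, nonpos_iff_eq_zero, ENNReal.ofReal_eq_zero] at this
    exact hε.not_ge this
  have hw_one : ∀ x, ∑' y, classWeight ρ F B x y * B.indicator 1 y = 1 := fun x =>
    (tsum_classWeight_mul_indicator B x).trans <| ENNReal.div_self (hsize x) <|
      eSize_ne_top ((hF.finite_class x).subset inter_subset_right) x
  have hμ_rel := hμ.isInvariantRel hE (hρ.apply_self hE)
  exact ⟨spread μ (classWeight ρ F B),
    hw.spread_univ_le fun x => by
      rw [tsum_classWeight (hF.finite_class x) (hsize x)]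
      exact ENNReal.inv_le_inv.2 (hF_dens x (mem_univ x)),
    hw.isInvariant_spread hE hρ hB hw_one hμ_rel hsupp,
    hw.restrict_spread hρ.1 hB hw_one hμ_rel hsupp⟩

/-- If `B` has positive `ρ`-density, then every finite Borel measure on `B` invariant with
respect to the restriction of `ρ` to `E ↾ B` extends to a `ρ`-invariant finite Borel
measure on `X`. -/
theorem stmt16 [MeasurableSpace X] [StandardBorelSpace X]
    (E : X → X → Prop) (hE : IsCBER E)
    (ρ : X → X → ℝ) (hρ : IsCocycle E ρ)
    (B : Set X) (hB : MeasurableSet B)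
    (hdens : HasPosDensityOn E ρ B Set.univ)
    (μ : Measure X) (hfin : IsFiniteMeasure μ) (hsupp : μ Bᶜ = 0)
    (hμinv : ∀ T : X ≃ᵐ X, (∀ x ∈ B, T x ∈ B ∧ E (T x) x) → (∀ x ∉ B, T x = x) →
      ∀ A : Set X, MeasurableSet A → A ⊆ B →
        μ (T '' A) = ∫⁻ x in A, ENNReal.ofReal (ρ (T x) x) ∂μ) :
    ∃ ν : Measure X, IsFiniteMeasure ν ∧ IsInvariant E ρ ν ∧ ν.restrict B = μ := by
  obtain ⟨ε, hε, hB_dens⟩ := hdens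
  obtain ⟨ν, hν_univ, hν⟩ := stmt16_general hE.1 hρ hB hε hB_dens hsupp hμinv
  exact ⟨ν, ⟨hν_univ.trans_lt (ENNReal.mul_lt_top (ENNReal.inv_lt_top.2 (ENNReal.ofReal_pos.2 hε))
    (measure_lt_top μ univ))⟩, hν⟩

end CocycleNadkarni
end

section
/- Let X be a standard Borel space, E a countable Borel equivalence relation on X, and ρ : E → (0,∞) a Borel cocycle. Then for every Borel set A ⊆ X and every real number r with 0 < r < 1, there exist an E-invariant Borel set B ⊆ X, a Borel set C ⊆ B, and a finite Borel subequivalence relation F of E restricted to C such that: ρ restricted to E restricted to the complement of B is smooth; r < |A ∩ [x]_F|^{[x]_F∖A}_ρ < 1 for all x ∈ C; and for all x ∈ B, either A ∩ [x]_E ⊆ C or [x]_E ∖ A ⊆ C. -/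
open MeasureTheory Set ENNReal

namespace CocycleNadkarni

variable {X : Type*} {Γ : Type*}

/-!
Call a finite subset `T` of an `E`-class balanced if `r < |A ∩ T|^{T ∖ A}_ρ < 1`. The finite subsets
of classes split into countably many Borel layers of pairwise disjoint sets, so a greedy choice,
layer by layer, yields a Borel family of disjoint balanced sets that is maximal; let `C₀` be its
union. Suppose that a class meets both `A ∖ C₀` and `(C₀)ᶜ ∖ A`. If each of these two sets had
infinitely many points of comparable mass in the class, then finite sums of these masses could be
matched up to an arbitrarily small relative error, and this would produce a balanced set disjoint
from `C₀`, against maximality. So one of the two sets has only finitely many points of comparable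
mass around each point. Choosing such a set on each of these classes in a Borel way gives a Borel
set `W` that meets them all and on which the lacunarity graph is locally finite, hence Borel
`ℕ`-colorable. Recording in addition how a point is reached from `W` extends the coloring to the
saturation of `W`, so `ρ` is smooth there. The invariant set `B` consists of the remaining classes,
and `C = C₀ ∩ B`.

Borel enumerations of the classes come from the Lusin–Novikov theorem. It is proved by a Cantor
scheme: if a Borel set with countable sections were not a countable union of Borel graphs, one of
its sections would contain an injective image of `2^ℕ`.
-/

section LusinNovikov

variable {α β Z ι κ : Type*}

/-- The σ-ideal basis of the Lusin–Novikov theorem: countable unions of Borel graphs of partial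
functions. A set of pairs is such a graph when the first projection is injective on it. -/
def IsBorelGraphUnion [MeasurableSpace α] [MeasurableSpace β] (N : Set (α × β)) : Prop :=
  ∃ 𝒢 : Set (Set (α × β)), 𝒢.Countable ∧
    (∀ G ∈ 𝒢, MeasurableSet G ∧ InjOn Prod.fst G) ∧ N = ⋃₀ 𝒢

namespace IsBorelGraphUnion

variable [MeasurableSpace α] [MeasurableSpace β] {M N : Set (α × β)}

lemma measurableSet (hN : IsBorelGraphUnion N) : MeasurableSet N := by
  obtain ⟨𝒢, h𝒢, hG, rfl⟩ := hN
  exact .sUnion h𝒢 fun G hG' => (hG G hG').1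

lemma of_injOn (hN : MeasurableSet N) (hinj : InjOn Prod.fst N) : IsBorelGraphUnion N :=
  ⟨{N}, countable_singleton N, by simp [hN, hinj], (sUnion_singleton N).symm⟩

lemma empty : IsBorelGraphUnion (∅ : Set (α × β)) :=
  of_injOn .empty (injOn_empty _)

lemma iUnion [Countable ι] {N : ι → Set (α × β)} (hN : ∀ i, IsBorelGraphUnion (N i)) :
    IsBorelGraphUnion (⋃ i, N i) := by
  choose 𝒢 h𝒢 hG hN using hN
  refine ⟨⋃ i, 𝒢 i, countable_iUnion h𝒢, fun G hG' => ?_, ?_⟩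
  · obtain ⟨i, hi⟩ := mem_iUnion.1 hG'
    exact hG i G hi
  · simp only [hN, sUnion_iUnion]

lemma union (hM : IsBorelGraphUnion M) (hN : IsBorelGraphUnion N) :
    IsBorelGraphUnion (M ∪ N) := by
  rw [union_eq_iUnion]
  exact iUnion (Bool.rec hN hM)

lemma inter (hN : IsBorelGraphUnion N) (hM : MeasurableSet M) : IsBorelGraphUnion (N ∩ M) := by
  obtain ⟨𝒢, h𝒢, hG, rfl⟩ := hN
  refine ⟨(· ∩ M) '' 𝒢, h𝒢.image _, ?_, by rw [sUnion_image, sUnion_eq_biUnion, iUnion₂_inter]⟩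
  rintro _ ⟨G, hG', rfl⟩
  exact ⟨(hG G hG').1.inter hM, (hG G hG').2.mono inter_subset_left⟩

lemma exists_seq (hN : IsBorelGraphUnion N) : ∃ G : ℕ → Set (α × β),
    (∀ n, MeasurableSet (G n)) ∧ (∀ n, InjOn Prod.fst (G n)) ∧ N = ⋃ n, G n := by
  obtain ⟨𝒢, h𝒢, hG, rfl⟩ := hN
  obtain ⟨G, hGr⟩ := (h𝒢.insert ∅).exists_eq_range (insert_nonempty ∅ 𝒢)
  have hG' (n : ℕ) : MeasurableSet (G n) ∧ InjOn Prod.fst (G n) := by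
    have hn : G n ∈ insert ∅ 𝒢 := hGr ▸ mem_range_self n
    rcases hn with hn | hn
    · rw [hn]
      exact ⟨.empty, injOn_empty _⟩
    · exact hG _ hn
  refine ⟨G, fun n => (hG' n).1, fun n => (hG' n).2, ?_⟩
  rw [← sUnion_range, ← hGr, sUnion_insert, empty_union]

end IsBorelGraphUnion

lemma analyticSet_inter [TopologicalSpace α] [T2Space α] {s t : Set α} (hs : AnalyticSet s)
    (ht : AnalyticSet t) : AnalyticSet (s ∩ t) := by
  rw [inter_eq_iInter]
  exact .iInter (Bool.rec ht hs)

lemma exists_measurableSet_separating_fibers [TopologicalSpace α] [PolishSpace α]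
    [MeasurableSpace α] [BorelSpace α] [TopologicalSpace β] [PolishSpace β] [MeasurableSpace β]
    [BorelSpace β] {T : Set (α × β)} (hT : AnalyticSet T) (hinj : InjOn Prod.fst T)
    {u v : Set β} (hu : MeasurableSet u) (hv : MeasurableSet v) (huv : Disjoint u v) :
    ∃ B : Set α, MeasurableSet B ∧ T ⊆ (B ×ˢ vᶜ) ∪ (Bᶜ ×ˢ uᶜ) := by
  have hana {w : Set β} (hw : MeasurableSet w) :
      AnalyticSet (Prod.fst '' (T ∩ Prod.snd ⁻¹' w)) :=
    (analyticSet_inter hT (hw.analyticSet.preimage continuous_snd)).image_of_continuous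
      continuous_fst
  have hdisj : Disjoint (Prod.fst '' (T ∩ Prod.snd ⁻¹' u)) (Prod.fst '' (T ∩ Prod.snd ⁻¹' v)) := by
    rw [Set.disjoint_left]
    rintro _ ⟨p, ⟨hp, hpu⟩, rfl⟩ ⟨q, ⟨hq, hqv⟩, hqp⟩
    exact huv.ne_of_mem hpu hqv (congrArg Prod.snd (hinj hp hq hqp.symm))
  obtain ⟨B, huB, hvB, hB⟩ := (hana hu).measurablySeparable (hana hv) hdisj
  refine ⟨B, hB, fun p hp => ?_⟩
  by_cases hpB : p.1 ∈ B
  · exact .inl ⟨hpB, fun hpv => Set.disjoint_left.1 hvB (mem_image_of_mem _ ⟨hp, hpv⟩) hpB⟩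
  · exact .inr ⟨hpB, fun hpu => hpB (huB (mem_image_of_mem _ ⟨hp, hpu⟩))⟩

lemma exists_borel_graph_superset [TopologicalSpace α] [PolishSpace α] [MeasurableSpace α]
    [BorelSpace α] [TopologicalSpace β] [PolishSpace β] [MeasurableSpace β] [BorelSpace β]
    {T : Set (α × β)} (hT : AnalyticSet T) (hinj : InjOn Prod.fst T) :
    ∃ G, T ⊆ G ∧ MeasurableSet G ∧ InjOn Prod.fst G := by
  let 𝓑 := TopologicalSpace.countableBasis β
  have h𝓑 : TopologicalSpace.IsTopologicalBasis 𝓑 := TopologicalSpace.isBasis_countableBasis β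
  have : Countable 𝓑 := (TopologicalSpace.countable_countableBasis β).to_subtype
  have hmeas (u : 𝓑) : MeasurableSet (u : Set β) := (h𝓑.isOpen u.2).measurableSet
  let I := {q : 𝓑 × 𝓑 // Disjoint (q.1 : Set β) (q.2 : Set β)}
  choose B hB hTB using fun q : I =>
    exists_measurableSet_separating_fibers hT hinj (hmeas q.1.1) (hmeas q.1.2) q.2
  refine ⟨⋂ q, (B q ×ˢ (q.1.2 : Set β)ᶜ) ∪ ((B q)ᶜ ×ˢ (q.1.1 : Set β)ᶜ), subset_iInter hTB,
    .iInter fun q => ((hB q).prod (hmeas _).compl).union ((hB q).compl.prod (hmeas _).compl), ?_⟩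
  rintro ⟨x, y⟩ hy ⟨x', y'⟩ hy' (rfl : x = x')
  by_contra hne
  obtain ⟨u, v, hu, hv, hyu, hyv, huv⟩ := t2_separation fun h : y = y' => hne (by rw [h])
  obtain ⟨u', hu', hyu', huu⟩ := h𝓑.exists_subset_of_mem_open hyu hu
  obtain ⟨v', hv', hyv', hvv⟩ := h𝓑.exists_subset_of_mem_open hyv hv
  let q : I := ⟨(⟨u', hu'⟩, ⟨v', hv'⟩), huv.mono huu hvv⟩
  have hxB : x ∈ B q :=
    (mem_iInter.1 hy q).elim (fun h => h.1) fun h => absurd hyu' h.2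
  exact (mem_iInter.1 hy' q).elim (fun h => h.2 hyv') fun h => h.1 hxB

/-- The largeness notion of the Lusin–Novikov construction: the images under `f` of the sets
`O i` meet a common vertical section, even after deleting any countable union of Borel graphs. -/
def IsPositive [MeasurableSpace α] [MeasurableSpace β] (f : Z → α × β) (O : ι → Set Z) : Prop :=
  ∀ N : Set (α × β), IsBorelGraphUnion N → (⋂ i, Prod.fst '' (f '' O i \ N)).Nonempty

lemma IsPositive.comp [MeasurableSpace α] [MeasurableSpace β] {f : Z → α × β} {O : ι → Set Z}
    (hO : IsPositive f O) (e : κ → ι) : IsPositive f (O ∘ e) :=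
  fun N hN => (hO N hN).mono fun _ hx => mem_iInter.2 fun k => mem_iInter.1 hx (e k)

/-- The one-step refinement of a Cantor scheme: `S` is a pair of small open subsets of `W`, with
closures in `W`, whose images under `h` are disjoint. -/
structure IsSplitting [PseudoEMetricSpace Z] (h : Z → β) (ε : ℝ≥0∞) (W : Set Z)
    (S : Bool → Set Z) : Prop where
  isOpen : ∀ b, IsOpen (S b)
  closure_subset : ∀ b, closure (S b) ⊆ W
  ediam_le : ∀ b, Metric.ediam (S b) ≤ ε
  disjoint : Disjoint (h '' S false) (h '' S true)

lemma exists_isSplitting_of_ne [PseudoEMetricSpace Z] [TopologicalSpace β] [T2Space β] {h : Z → β}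
    (hh : Continuous h) {𝓑 : Set (Set Z)} (h𝓑 : TopologicalSpace.IsTopologicalBasis 𝓑) {W : Set Z}
    (hW : IsOpen W) {ε : ℝ≥0∞} (hε : ε ≠ 0) {z : Bool → Z} (hz : ∀ b, z b ∈ W)
    (hne : h (z false) ≠ h (z true)) :
    ∃ S : Bool → 𝓑, IsSplitting h ε W (fun b => S b) ∧ ∀ b, z b ∈ (S b : Set Z) := by
  obtain ⟨u, v, hu, hv, hzu, hzv, huv⟩ := t2_separation hne
  have hpiece (b : Bool) : ∃ U ∈ 𝓑, z b ∈ U ∧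
      closure U ⊆ W ∩ h ⁻¹' cond b v u ∩ Metric.eball (z b) (ε / 2) := by
    refine h𝓑.exists_closure_subset (Filter.inter_mem (Filter.inter_mem (hW.mem_nhds (hz b))
      (hh.continuousAt ?_)) (Metric.eball_mem_nhds _ (ENNReal.half_pos hε)))
    cases b
    exacts [hu.mem_nhds hzu, hv.mem_nhds hzv]
  choose U hU hzU hUsub using hpiece
  have hhU (b : Bool) : h '' U b ⊆ cond b v u :=
    image_subset_iff.2 fun p hp => (hUsub b (subset_closure hp)).1.2
  refine ⟨fun b => ⟨U b, hU b⟩, ⟨fun b => h𝓑.isOpen (hU b),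
    fun b p hp => (hUsub b hp).1.1, fun b => ?_, huv.mono (hhU false) (hhU true)⟩, hzU⟩
  calc Metric.ediam (U b) ≤ Metric.ediam (Metric.eball (z b) (ε / 2)) :=
        Metric.ediam_mono fun p hp => (hUsub b (subset_closure hp)).2
    _ ≤ 2 * (ε / 2) := Metric.ediam_eball_le
    _ = ε := ENNReal.mul_div_cancel two_ne_zero ofNat_ne_top

lemma analyticSet_image_sdiff [TopologicalSpace α] [MeasurableSpace α] [BorelSpace α]
    [TopologicalSpace Z] [PolishSpace Z] {f : Z → α} (hf : Continuous f) {W : Set Z}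
    (hW : IsOpen W) {N : Set α} (hN : MeasurableSet N) : AnalyticSet (f '' W \ N) := by
  borelize Z
  rw [sdiff_eq, ← image_inter_preimage]
  exact (hW.measurableSet.inter (hf.measurable hN.compl)).analyticSet.image_of_continuous hf

section Scheme

variable [TopologicalSpace α] [PolishSpace α] [MeasurableSpace α] [BorelSpace α]
  [TopologicalSpace β] [PolishSpace β] [MeasurableSpace β] [BorelSpace β]
  [MetricSpace Z] [CompleteSpace Z] [SecondCountableTopology Z] {f : Z → α × β}

/- If all pairs of basic open sets fail, witnessed by small sets with union `M`, then off `M` the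
part of the image of `W` over the common sections is the graph of a function, hence small too. -/
lemma IsPositive.exists_isSplitting_update [Countable ι] [DecidableEq ι] (hf : Continuous f)
    {O : ι → Bool → Set Z} (hO : ∀ i b, IsOpen (O i b))
    (hpos : IsPositive f (Function.uncurry O)) {a : ι} {W : Set Z} (ha : ∀ b, O a b = W)
    {ε : ℝ≥0∞} (hε : ε ≠ 0) : ∃ S : Bool → Set Z, IsSplitting (Prod.snd ∘ f) ε W S ∧
      IsPositive f (Function.uncurry (Function.update O a S)) := by
  by_contra! hcon
  let 𝓑 := TopologicalSpace.countableBasis Z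
  have : Countable 𝓑 := (TopologicalSpace.countable_countableBasis Z).to_subtype
  let I := {S : Bool → 𝓑 // IsSplitting (Prod.snd ∘ f) ε W fun b => S b}
  have hsmall (S : I) : ∃ N, IsBorelGraphUnion N ∧ ¬ (⋂ j, Prod.fst ''
      (f '' Function.uncurry (Function.update O a fun b => S.1 b) j \ N)).Nonempty := by
    simpa only [IsPositive, not_forall, exists_prop] using hcon _ S.2
  choose N hN hNempty using hsmall
  set M := ⋃ S, N S
  have hM : IsBorelGraphUnion M := .iUnion hN
  have hW : IsOpen W := ha true ▸ hO a true
  let T := (f '' W \ M) ∩ Prod.fst ⁻¹' ⋂ j, Prod.fst '' (f '' Function.uncurry O j \ M)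
  have hT : AnalyticSet T := by
    have : Nonempty ι := ⟨a⟩
    refine analyticSet_inter (analyticSet_image_sdiff hf hW hM.measurableSet)
      (.preimage (.iInter fun j => ?_) continuous_fst)
    exact (analyticSet_image_sdiff hf (hO j.1 j.2) hM.measurableSet).image_of_continuous
      continuous_fst
  have hTinj : InjOn Prod.fst T := by
    rintro _ ⟨⟨⟨z, hz, rfl⟩, hzM⟩, hx⟩ _ ⟨⟨⟨z', hz', rfl⟩, hzM'⟩, -⟩ hzz
    by_contra hne
    obtain ⟨S, hS, hzS⟩ := exists_isSplitting_of_ne (h := Prod.snd ∘ f) (continuous_snd.comp hf)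
      (TopologicalSpace.isBasis_countableBasis Z) hW hε (z := fun b => cond b z' z)
      (Bool.rec hz hz') fun h => hne (Prod.ext hzz h)
    refine hNempty ⟨S, hS⟩ ⟨(f z).1, mem_iInter.2 fun ⟨i, b⟩ => ?_⟩
    have hNM : N ⟨S, hS⟩ ⊆ M := subset_iUnion N _
    rcases eq_or_ne i a with rfl | hi
    · simp only [Function.uncurry_apply_pair, Function.update_self]
      cases b
      · exact ⟨f z, ⟨mem_image_of_mem f (hzS false), fun h => hzM (hNM h)⟩, rfl⟩
      · exact ⟨f z', ⟨mem_image_of_mem f (hzS true), fun h => hzM' (hNM h)⟩, hzz.symm⟩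
    · simp only [Function.uncurry_apply_pair, Function.update_of_ne hi]
      exact image_mono (sdiff_subset_sdiff_right hNM) (mem_iInter.1 hx (i, b))
  obtain ⟨G, hTG, hG, hGinj⟩ := exists_borel_graph_superset hT hTinj
  obtain ⟨x, hx⟩ := hpos (M ∪ G) (hM.union (.of_injOn hG hGinj))
  obtain ⟨p, ⟨hpW, hpMG⟩, rfl⟩ := mem_iInter.1 hx (a, true)
  refine hpMG (.inr (hTG ⟨⟨ha true ▸ hpW, fun h => hpMG (.inl h)⟩, ?_⟩))
  exact iInter_mono (fun j => image_mono (sdiff_subset_sdiff_right subset_union_left)) hx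

lemma IsPositive.exists_isSplitting_forall [Finite ι] (hf : Continuous f) {O : ι → Set Z}
    (hO : ∀ i, IsOpen (O i)) (hpos : IsPositive f O) {ε : ℝ≥0∞} (hε : ε ≠ 0) :
    ∃ S : ι → Bool → Set Z, (∀ i, IsSplitting (Prod.snd ∘ f) ε (O i) (S i)) ∧
      IsPositive f (Function.uncurry S) := by
  classical
  have := Fintype.ofFinite ι
  suffices ∀ t : Finset ι, ∃ S : ι → Bool → Set Z,
      (∀ i ∈ t, IsSplitting (Prod.snd ∘ f) ε (O i) (S i)) ∧ (∀ i ∉ t, ∀ b, S i b = O i) ∧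
      IsPositive f (Function.uncurry S) by
    obtain ⟨S, hS, -, hSpos⟩ := this Finset.univ
    exact ⟨S, fun i => hS i (Finset.mem_univ i), hSpos⟩
  intro t
  induction t using Finset.induction_on with
  | empty => exact ⟨fun i _ => O i, by simp, by simp, hpos.comp Prod.fst⟩
  | insert a t ha ih =>
    obtain ⟨S, hSt, hSO, hSpos⟩ := ih
    have hSopen (i : ι) (b : Bool) : IsOpen (S i b) := by
      by_cases hi : i ∈ t
      · exact (hSt i hi).isOpen b
      · exact hSO i hi b ▸ hO i
    obtain ⟨Sa, hSa, hpos'⟩ := hSpos.exists_isSplitting_update hf hSopen (hSO a ha) hε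
    refine ⟨Function.update S a Sa, fun i hi => ?_, fun i hi => ?_, hpos'⟩
    · rcases eq_or_ne i a with rfl | hia
      · rwa [Function.update_self]
      · rw [Function.update_of_ne hia]
        exact hSt i (Finset.mem_of_mem_insert_of_ne hi hia)
    · rw [Finset.mem_insert, not_or] at hi
      rw [Function.update_of_ne hi.1]
      exact hSO i hi.2

lemma IsPositive.exists_cantorScheme (hf : Continuous f)
    (hpos : IsPositive f fun _ : Unit => (univ : Set Z)) :
    ∃ A : List Bool → Set Z,
      (∀ l, IsSplitting (Prod.snd ∘ f) (l.length : ℝ≥0∞)⁻¹ (A l) fun b => A (b :: l)) ∧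
      ∀ n, IsPositive f fun w : List.Vector Bool n => A w.1 := by
  let Level (n : ℕ) := {O : List.Vector Bool n → Set Z // (∀ w, IsOpen (O w)) ∧ IsPositive f O}
  have hstep (n : ℕ) (O : Level n) : ∃ O' : Level (n + 1), ∀ w,
      IsSplitting (Prod.snd ∘ f) (n : ℝ≥0∞)⁻¹ (O.1 w) fun b => O'.1 (b ::ᵥ w) := by
    obtain ⟨S, hS, hSpos⟩ := O.2.2.exists_isSplitting_forall hf O.2.1
      (ENNReal.inv_ne_zero.2 (natCast_ne_top n))
    have hpos' := hSpos.comp fun w : List.Vector Bool (n + 1) => (w.tail, w.head)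
    exact ⟨⟨fun w => S w.tail w.head, fun w => (hS _).isOpen _, hpos'⟩, fun w => by
      simpa only [List.Vector.tail_cons, List.Vector.head_cons] using hS w⟩
  choose next hnext using hstep
  obtain ⟨level, hlevel⟩ : ∃ level : ∀ n, Level n, ∀ n, level (n + 1) = next n (level n) :=
    ⟨Nat.rec ⟨fun _ => univ, fun _ => isOpen_univ, hpos.comp fun _ => ()⟩ next, fun _ => rfl⟩
  refine ⟨fun l => (level l.length).1 ⟨l, rfl⟩, fun l => ?_, fun n => ?_⟩
  · have hl := hnext l.length (level l.length) ⟨l, rfl⟩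
    rwa [← hlevel] at hl
  · convert (level n).2.2 using 2 with w
    obtain ⟨l, rfl⟩ := w
    rfl

end Scheme

lemma map_eq_of_vanishingDiam [TopologicalSpace α] [T2Space α] [PseudoMetricSpace Z]
    {φ : Z → α} (hφ : Continuous φ) {A : List β → Set Z} (hA : CantorScheme.VanishingDiam A)
    (hlevel : ∀ n, ∃ a, ∀ l, l.length = n → a ∈ φ '' A l) {z : (ℕ → β) → Z}
    (hz : ∀ x n, z x ∈ A (PiNat.res x n)) (x y : ℕ → β) : φ (z x) = φ (z y) := by
  choose a ha using hlevel
  have hlim (x : ℕ → β) : Filter.Tendsto a Filter.atTop (nhds (φ (z x))) := by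
    choose p hpA hpa using fun n => ha n (PiNat.res x n) (PiNat.res_length x n)
    have hp : Filter.Tendsto p Filter.atTop (nhds (z x)) :=
      tendsto_iff_edist_tendsto_0.2 <| tendsto_of_tendsto_of_tendsto_of_le_of_le
        tendsto_const_nhds (hA x) (fun _ => zero_le) fun n =>
          Metric.edist_le_ediam_of_mem (hpA n) (hz x n)
    exact ((hφ.tendsto _).comp hp).congr hpa
  exact tendsto_nhds_unique (hlim x) (hlim y)

lemma injective_of_disjoint_image {h : Z → α} {A : List Bool → Set Z}
    (hA : ∀ l, Disjoint (h '' A (false :: l)) (h '' A (true :: l))) {z : (ℕ → Bool) → Z}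
    (hz : ∀ x n, z x ∈ A (PiNat.res x n)) : Function.Injective (h ∘ z) := by
  intro x y hxy
  refine PiNat.res_injective (funext fun n => ?_)
  induction n with
  | zero => rfl
  | succ n ih =>
    have hx := mem_image_of_mem h (hz x (n + 1))
    have hy := mem_image_of_mem h (hz y (n + 1))
    rw [show h (z x) = h (z y) from hxy] at hx
    rw [PiNat.res_succ] at hx hy ⊢
    rw [PiNat.res_succ, ih]
    rw [ih] at hx
    cases hxn : x n <;> cases hyn : y n <;> rw [hxn] at hx <;> rw [hyn] at hy
    · exact absurd hy (Set.disjoint_left.1 (hA _) hx)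
    · exact absurd hx (Set.disjoint_left.1 (hA _) hy)

lemma not_isPositive_of_countable_sections [TopologicalSpace α] [PolishSpace α]
    [MeasurableSpace α] [BorelSpace α] [TopologicalSpace β] [PolishSpace β] [MeasurableSpace β]
    [BorelSpace β] [MetricSpace Z] [CompleteSpace Z] [SecondCountableTopology Z] {f : Z → α × β}
    (hf : Continuous f) (hc : ∀ x, (Prod.mk x ⁻¹' range f).Countable) :
    ¬ IsPositive f fun _ : Unit => (univ : Set Z) := by
  intro hpos
  obtain ⟨A, hsplit, hApos⟩ := hpos.exists_cantorScheme hf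
  have hlevel (n : ℕ) : ∃ x, ∀ l, l.length = n → x ∈ (Prod.fst ∘ f) '' A l := by
    obtain ⟨x, hx⟩ := hApos n ∅ .empty
    refine ⟨x, fun l hl => ?_⟩
    simpa only [sdiff_empty, image_comp] using mem_iInter.1 hx ⟨l, hl⟩
  have hdiam : CantorScheme.VanishingDiam A := fun x => by
    rw [← Filter.tendsto_add_atTop_iff_nat 1]
    refine tendsto_of_tendsto_of_tendsto_of_le_of_le tendsto_const_nhds
      ENNReal.tendsto_inv_nat_nhds_zero (fun _ => zero_le) fun n => ?_
    have hn := (hsplit (PiNat.res x n)).ediam_le (x n)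
    rwa [PiNat.res_length] at hn
  have hanti : CantorScheme.ClosureAntitone A := fun l b => (hsplit l).closure_subset b
  have hdom := hanti.map_of_vanishingDiam hdiam fun l =>
    have ⟨_, hx⟩ := hlevel l.length
    image_nonempty.1 ⟨_, hx l rfl⟩
  let z (x : ℕ → Bool) : Z := (CantorScheme.inducedMap A).2 ⟨x, hdom ▸ mem_univ x⟩
  have hz (x : ℕ → Bool) (n : ℕ) : z x ∈ A (PiNat.res x n) := CantorScheme.map_mem _ n
  have hinj : Function.Injective ((Prod.snd ∘ f) ∘ z) :=
    injective_of_disjoint_image (fun l => (hsplit l).disjoint) hz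
  have hfst := map_eq_of_vanishingDiam (continuous_fst.comp hf) hdiam hlevel hz
  have hrange : (range ((Prod.snd ∘ f) ∘ z)).Countable := by
    refine (hc (f (z fun _ => false)).1).mono ?_
    rintro _ ⟨x, rfl⟩
    exact ⟨z x, Prod.ext (hfst x _) rfl⟩
  have := hrange.to_subtype
  have hcount : Countable (ℕ → Bool) := (rangeFactorization_injective.2 hinj).countable
  obtain ⟨e, he⟩ := exists_surjective_nat (ℕ → Bool)
  obtain ⟨n, hn⟩ := he fun n => !(e n n)
  exact (Bool.not_ne_self (e n n)).symm (congrFun hn n)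

theorem isBorelGraphUnion_of_countable_sections [MeasurableSpace α] [StandardBorelSpace α]
    [MeasurableSpace β] [StandardBorelSpace β] {P : Set (α × β)} (hP : MeasurableSet P)
    (hc : ∀ x, (Prod.mk x ⁻¹' P).Countable) : IsBorelGraphUnion P := by
  let := upgradeStandardBorel α
  let := upgradeStandardBorel β
  let := TopologicalSpace.upgradeIsCompletelyMetrizable (ℕ → ℕ)
  suffices ∃ N, IsBorelGraphUnion N ∧ P ⊆ N by
    obtain ⟨N, hN, hPN⟩ := this
    exact inter_eq_self_of_subset_right hPN ▸ hN.inter hP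
  have hana := hP.analyticSet
  rw [AnalyticSet] at hana
  rcases hana with rfl | ⟨f, hf, rfl⟩
  · exact ⟨∅, .empty, subset_rfl⟩
  by_contra! hcon
  refine not_isPositive_of_countable_sections hf hc fun N hN => ?_
  obtain ⟨p, hp, hpN⟩ := not_subset.1 (hcon N hN)
  exact ⟨p.1, mem_iInter.2 fun _ => ⟨p, ⟨image_univ ▸ hp, hpN⟩, rfl⟩⟩

end LusinNovikov

section Families

variable {α : Type*}

/-- A sequence of Borel functions enumerating every class of `E`, as provided by the
Lusin–Novikov theorem. -/
structure IsBorelEnumeration [MeasurableSpace X] (E : X → X → Prop) (g : ℕ → X → X) : Prop where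
  measurable : ∀ n, Measurable (g n)
  rel : ∀ n x, E x (g n x)
  exists_eq : ∀ ⦃x y⦄, E x y → ∃ n, g n x = y

/-- A Borel family `S` of subsets of `X` in which `S a` lies in the `E`-class of the point `u a`.
The root `u a` allows the elements of `S a` to be listed by an enumeration of `E`. -/
structure IsBorelFamily [MeasurableSpace X] [MeasurableSpace α] (E : X → X → Prop) (u : α → X)
    (S : α → Set X) : Prop where
  measurable_root : Measurable u
  measurableSet : MeasurableSet {q : α × X | q.2 ∈ S q.1}
  rel : ∀ ⦃a y⦄, y ∈ S a → E (u a) y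

lemma exists_measurable_eq_of_injOn_fst [MeasurableSpace X] [StandardBorelSpace X]
    {G : Set (X × X)} (hG : MeasurableSet G) (hinj : InjOn Prod.fst G) :
    ∃ f : X → X, Measurable f ∧ ∀ p ∈ G, f p.1 = p.2 := by
  have := hG.standardBorel
  have hemb : MeasurableEmbedding fun p : G => p.1.1 :=
    (measurable_fst.comp measurable_subtype_coe).measurableEmbedding hinj.injective
  obtain ⟨f, hf, hfG⟩ := hemb.exists_measurable_extend
    (measurable_snd.comp measurable_subtype_coe : Measurable fun p : G => p.1.2) fun x => ⟨x⟩
  exact ⟨f, hf, fun p hp => congrFun hfG ⟨p, hp⟩⟩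

lemma IsCBER.exists_isBorelEnumeration [MeasurableSpace X] [StandardBorelSpace X]
    {E : X → X → Prop} (hE : IsCBER E) : ∃ g, IsBorelEnumeration E g := by
  classical
  obtain ⟨G, hG, hinj, hEG⟩ := (isBorelGraphUnion_of_countable_sections hE.2.1 hE.2.2).exists_seq
  choose f hf hfG using fun n => exists_measurable_eq_of_injOn_fst (hG n) (hinj n)
  refine ⟨fun n x => if E x (f n x) then f n x else x, fun n => ?_, fun n x => ?_,
    fun x y hxy => ?_⟩
  · exact .ite (hE.2.1.preimage (measurable_id.prodMk (hf n))) (hf n) measurable_id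
  · split_ifs with h
    exacts [h, hE.1.refl x]
  · obtain ⟨n, hn⟩ := mem_iUnion.1 (hEG ▸ hxy : (x, y) ∈ ⋃ n, G n)
    have hfx : f n x = y := hfG n (x, y) hn
    exact ⟨n, by simp only [hfx, if_pos hxy]⟩

lemma tsum_subtype_eq_tsum_first_occurrences {e : ℕ → α} {T : Set α} (hT : T ⊆ range e)
    (f : α → ℝ≥0∞) :
    ∑' y : T, f y = ∑' n, {n | e n ∈ T ∧ ∀ m < n, e m ≠ e n}.indicator (f ∘ e) n := by
  classical
  have he : BijOn e {n | e n ∈ T ∧ ∀ m < n, e m ≠ e n} T := by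
    refine ⟨fun n hn => hn.1, fun m hm n hn hmn => ?_, fun y hy => ?_⟩
    · by_contra hne
      rcases lt_or_gt_of_ne hne with h | h
      exacts [hn.2 m h hmn, hm.2 n h hmn.symm]
    · have hex : ∃ n, e n = y := hT hy
      have hfind := Nat.find_spec hex
      exact ⟨Nat.find hex, ⟨hfind.symm ▸ hy, fun m hm => hfind.symm ▸ Nat.find_min hex hm⟩, hfind⟩
  rw [← tsum_subtype]
  exact ((he.equiv e).tsum_eq fun y : T => f y).symm

namespace IsBorelFamily

variable [MeasurableSpace X] [MeasurableSpace α] {E : X → X → Prop} {g : ℕ → X → X} {u : α → X}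
  {S : α → Set X}

lemma inter (hS : IsBorelFamily E u S) {T : α → Set X}
    (hT : MeasurableSet {q : α × X | q.2 ∈ T q.1}) : IsBorelFamily E u fun a => S a ∩ T a :=
  ⟨hS.measurable_root, hS.measurableSet.inter hT, fun _ _ hy => hS.rel hy.1⟩

lemma comp {β : Type*} [MeasurableSpace β] (hS : IsBorelFamily E u S) {f : β → α}
    (hf : Measurable f) : IsBorelFamily E (u ∘ f) (S ∘ f) :=
  ⟨hS.measurable_root.comp hf, (hf.prodMap measurable_id) hS.measurableSet, fun _ _ hy => hS.rel hy⟩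

lemma of_layers {ι : Type*} [MeasurableSpace ι] [Countable ι] [MeasurableSingletonClass ι]
    {S : ι × α → Set X} (hu : Measurable u) (hS : ∀ i, IsBorelFamily E u fun a => S (i, a)) :
    IsBorelFamily E (u ∘ Prod.snd) S where
  measurable_root := hu.comp measurable_snd
  measurableSet := by
    have heq : {q : (ι × α) × X | q.2 ∈ S q.1} =
        ⋃ i, {q | q.1.1 = i} ∩ Prod.map Prod.snd id ⁻¹' {q : α × X | q.2 ∈ S (i, q.1)} := by
      ext q
      simp
    rw [heq]
    exact .iUnion fun i =>
      ((measurable_fst.comp measurable_fst) (measurableSet_singleton i)).inter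
        ((measurable_snd.prodMap measurable_id) (hS i).measurableSet)
  rel := fun _ _ hy => (hS _).rel hy

lemma measurableSet_mem (hS : IsBorelFamily E u S) {f : α → X} (hf : Measurable f) :
    MeasurableSet {a | f a ∈ S a} :=
  measurable_id.prodMk hf hS.measurableSet

lemma measurableSet_nonempty (hS : IsBorelFamily E u S) (hg : IsBorelEnumeration E g) :
    MeasurableSet {a | (S a).Nonempty} := by
  have heq : {a | (S a).Nonempty} = ⋃ n, {a | g n (u a) ∈ S a} := by
    ext a
    simp only [mem_ofPred_eq, mem_iUnion]
    refine ⟨fun ⟨y, hy⟩ => ?_, fun ⟨n, hn⟩ => ⟨_, hn⟩⟩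
    obtain ⟨n, rfl⟩ := hg.exists_eq (hS.rel hy)
    exact ⟨n, hy⟩
  rw [heq]
  exact .iUnion fun n => hS.measurableSet_mem ((hg.measurable n).comp hS.measurable_root)

lemma measurable_tsum [MeasurableEq X] (hS : IsBorelFamily E u S) (hg : IsBorelEnumeration E g)
    {h : α → X → ℝ≥0∞} (hh : Measurable (Function.uncurry h)) :
    Measurable fun a => ∑' y : S a, h a y := by
  have hgu (n : ℕ) : Measurable fun a => g n (u a) := (hg.measurable n).comp hS.measurable_root
  have hrange (a : α) : S a ⊆ range fun n => g n (u a) := fun _ hy => hg.exists_eq (hS.rel hy)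
  simp_rw [fun a => tsum_subtype_eq_tsum_first_occurrences (hrange a) (h a)]
  have hfirst (n : ℕ) : MeasurableSet {a | ∀ m < n, g m (u a) ≠ g n (u a)} := by
    simp only [ofPred_forall]
    exact .iInter fun m => .iInter fun _ => (measurableSet_eq_fun (hgu m) (hgu n)).compl
  exact .tsum fun n => Measurable.indicator (hh.comp (measurable_id.prodMk (hgu n)))
    ((hS.measurableSet_mem (hgu n)).inter (hfirst n))

lemma measurableSet_infinite [MeasurableEq X] (hS : IsBorelFamily E u S)
    (hg : IsBorelEnumeration E g) : MeasurableSet {a | (S a).Infinite} := by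
  have heq (a : α) : (S a).Infinite ↔ ∑' _ : S a, (1 : ℝ≥0∞) = ∞ := by
    rw [ENNReal.tsum_set_one, ← encard_eq_top_iff, ENat.toENNReal_eq_top]
  simp_rw [heq]
  exact hS.measurable_tsum hg (h := fun _ _ => 1) measurable_const (measurableSet_singleton ∞)

end IsBorelFamily

end Families

section Tiles

/-- The finite set of the points `g i x` with `(i, j) ∈ σ`, provided that `g j` carries each of
them back to `x`, and `∅` otherwise. The return indices `j` ensure that a point lies in
`returnTile g σ x` for only finitely many `x`. -/
def returnTile (g : ℕ → X → X) (σ : Finset (ℕ × ℕ)) (x : X) : Set X :=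
  {y | (∀ p ∈ σ, g p.2 (g p.1 x) = x) ∧ ∃ p ∈ σ, g p.1 x = y}

lemma finite_returnTile (g : ℕ → X → X) (σ : Finset (ℕ × ℕ)) (x : X) : (returnTile g σ x).Finite :=
  (σ.finite_toSet.image fun p : ℕ × ℕ => g p.1 x).subset fun _ hy => hy.2

lemma finite_setOf_mem_returnTile (g : ℕ → X → X) (σ : Finset (ℕ × ℕ)) (y : X) :
    {x | y ∈ returnTile g σ x}.Finite := by
  refine (σ.finite_toSet.image fun p => g p.2 y).subset ?_
  rintro x ⟨hret, p, hp, rfl⟩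
  exact ⟨p, hp, hret p hp⟩

variable [MeasurableSpace X] {E : X → X → Prop} {g : ℕ → X → X}

lemma exists_measurable_coloring [StandardBorelSpace X] (hg : IsBorelEnumeration E g)
    {N : X → Set X} (hN : IsBorelFamily E id N) (hfin : ∀ x, (N x).Finite) :
    ∃ c : X → ℕ, Measurable c ∧ ∀ ⦃x y⦄, x ≠ y → y ∈ N x → c x ≠ c y := by
  classical
  let := upgradeStandardBorel X
  have hbasis := (TopologicalSpace.isBasis_countableBasis X).insert_empty
  obtain ⟨U, hU⟩ := ((TopologicalSpace.countable_countableBasis X).insert ∅).exists_eq_range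
    (insert_nonempty _ _)
  rw [hU] at hbasis
  have hUm (n : ℕ) : MeasurableSet (U n) := (hbasis.isOpen (mem_range_self n)).measurableSet
  have hisolated (x : X) : ∃ n, x ∈ U n ∧ ¬ (N x ∩ (U n \ {x})).Nonempty := by
    obtain ⟨_, ⟨n, rfl⟩, hxU, hUN⟩ := hbasis.exists_subset_of_mem_open
      (show x ∈ (N x \ {x})ᶜ from fun h => h.2 rfl) (hfin x).sdiff.isClosed.isOpen_compl
    exact ⟨n, hxU, fun ⟨y, hyN, hyU, hyx⟩ => hUN hyU ⟨hyN, hyx⟩⟩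
  have hmeas (n : ℕ) : MeasurableSet {x | x ∈ U n ∧ ¬ (N x ∩ (U n \ {x})).Nonempty} := by
    have hfam := hN.inter (T := fun x => U n \ {x}) <|
      (measurable_snd (hUm n)).diff (measurableSet_eq_fun measurable_snd measurable_fst)
    exact (hUm n).inter (hfam.measurableSet_nonempty hg).compl
  refine ⟨fun x => Nat.find (hisolated x), measurable_find hisolated hmeas,
    fun x y hne hy (heq : Nat.find (hisolated x) = Nat.find (hisolated y)) => ?_⟩
  exact (Nat.find_spec (hisolated x)).2
    ⟨y, hy, heq ▸ (Nat.find_spec (hisolated y)).1, hne.symm⟩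

lemma isBorelFamily_returnTile [MeasurableEq X] (hg : IsBorelEnumeration E g)
    (σ : Finset (ℕ × ℕ)) : IsBorelFamily E id (returnTile g σ) where
  measurable_root := measurable_id
  measurableSet := by
    have hreturn : MeasurableSet {q : X × X | ∀ p ∈ σ, g p.2 (g p.1 q.1) = q.1} := by
      simp only [ofPred_forall]
      exact .iInter fun p => .iInter fun _ => measurableSet_eq_fun
        ((hg.measurable p.2).comp ((hg.measurable p.1).comp measurable_fst)) measurable_fst
    have hlisted : MeasurableSet {q : X × X | ∃ p ∈ σ, g p.1 q.1 = q.2} := by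
      simp only [ofPred_exists, ofPred_and]
      exact .iUnion fun p => (MeasurableSet.const _).inter
        (measurableSet_eq_fun ((hg.measurable p.1).comp measurable_fst) measurable_snd)
    exact hreturn.inter hlisted
  rel := by
    rintro x _ ⟨-, p, -, rfl⟩
    exact hg.rel p.1 x

lemma exists_returnTile_eq (hE : Equivalence E) (hg : IsBorelEnumeration E g) {x : X}
    {T : Finset X} (hT : ∀ y ∈ T, E x y) : ∃ σ, returnTile g σ x = T := by
  classical
  choose! i hi using fun y (hy : E x y) => hg.exists_eq hy
  choose! j hj using fun y (hy : E x y) => hg.exists_eq (hE.symm hy)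
  refine ⟨T.image fun y => (i y, j y), ext fun y => ?_⟩
  simp only [returnTile, Finset.forall_mem_image, Finset.exists_mem_image, mem_ofPred_eq,
    Finset.mem_coe]
  constructor
  · rintro ⟨-, z, hz, rfl⟩
    rwa [hi z (hT z hz)]
  · exact fun hy => ⟨fun z hz => by rw [hi z (hT z hz), hj z (hT z hz)], y, hy, hi y (hT y hy)⟩

lemma exists_measurable_coloring_returnTile [StandardBorelSpace X] (hE : Equivalence E)
    (hg : IsBorelEnumeration E g) (σ : Finset (ℕ × ℕ)) : ∃ c : X → ℕ, Measurable c ∧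
      ∀ ⦃x x'⦄, x ≠ x' → c x = c x' → Disjoint (returnTile g σ x) (returnTile g σ x') := by
  have hσ := isBorelFamily_returnTile hg σ
  have hconflict : IsBorelFamily E id
      fun x => {x' | (returnTile g σ x ∩ returnTile g σ x').Nonempty} := by
    have hpair := (hσ.comp measurable_fst).inter (T := fun q : X × X => returnTile g σ q.2)
      (hσ.comp measurable_snd).measurableSet
    exact ⟨measurable_id, hpair.measurableSet_nonempty hg,
      fun x x' ⟨y, hy, hy'⟩ => hE.trans (hσ.rel hy) (hE.symm (hσ.rel hy'))⟩
  have hfin (x : X) : {x' | (returnTile g σ x ∩ returnTile g σ x').Nonempty}.Finite :=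
    ((finite_returnTile g σ x).biUnion fun y _ => finite_setOf_mem_returnTile g σ y).subset
      fun x' ⟨y, hy, hy'⟩ => mem_biUnion hy hy'
  obtain ⟨c, hc, hcne⟩ := exists_measurable_coloring hg hconflict hfin
  refine ⟨c, hc, fun x x' hne hcx => ?_⟩
  rw [disjoint_iff_inter_eq_empty, ← not_nonempty_iff_eq_empty]
  exact fun h => hcne hne h hcx

/-- A Borel listing of the finite sets of `E`-equivalent points: `S (m, x)` is a finite subset of
the class of `x`, every such subset is listed, and the sets in a layer `S (m, ·)` are disjoint. -/
structure IsTileSystem (E : X → X → Prop) (S : ℕ × X → Set X) : Prop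
    extends IsBorelFamily E Prod.snd S where
  finite : ∀ p, (S p).Finite
  disjoint_layer : ∀ m ⦃x x'⦄, x ≠ x' → Disjoint (S (m, x)) (S (m, x'))
  exists_eq : ∀ ⦃x⦄ {T : Finset X}, (∀ y ∈ T, E x y) → ∃ m, S (m, x) = T

lemma exists_isTileSystem [StandardBorelSpace X] (hE : Equivalence E)
    (hg : IsBorelEnumeration E g) : ∃ S, IsTileSystem E S := by
  choose c hc hdisj using exists_measurable_coloring_returnTile hE hg
  obtain ⟨e, he⟩ := exists_surjective_nat (Finset (ℕ × ℕ) × ℕ)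
  let S (p : ℕ × X) : Set X :=
    returnTile g (e p.1).1 p.2 ∩ {_y | c (e p.1).1 p.2 = (e p.1).2}
  have hS : IsBorelFamily E (id ∘ Prod.snd) S := .of_layers measurable_id fun m =>
    (isBorelFamily_returnTile hg (e m).1).inter (T := fun x => {_y | c (e m).1 x = (e m).2})
      (((hc _).comp measurable_fst) (measurableSet_singleton (e m).2))
  refine ⟨S, hS, ?_, ?_, ?_⟩
  · exact fun p => (finite_returnTile g _ p.2).subset inter_subset_left
  · intro m x x' hne
    rw [Set.disjoint_left]
    exact fun y hy hy' => Set.disjoint_left.1 (hdisj _ hne (hy.2.trans hy'.2.symm)) hy.1 hy'.1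
  · intro x T hT
    obtain ⟨σ, hσ⟩ := exists_returnTile_eq hE hg hT
    obtain ⟨m, hm⟩ := he (σ, c σ x)
    refine ⟨m, ?_⟩
    simp [S, hm, hσ]

end Tiles

section Greedy

variable {ι : Type*}

/-- The equivalence relation on `X` whose nontrivial classes are the sets `S p` with `p ∈ D`,
when these are pairwise disjoint. -/
def tileRel (S : ι → Set X) (D : Set ι) (y y' : X) : Prop :=
  y = y' ∨ ∃ p ∈ D, y ∈ S p ∧ y' ∈ S p

lemma equivalence_tileRel {S : ι → Set X} {D : Set ι} (hD : D.PairwiseDisjoint S) :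
    Equivalence (tileRel S D) where
  refl _ := .inl rfl
  symm := by
    rintro y y' (rfl | ⟨p, hp, hy, hy'⟩)
    exacts [.inl rfl, .inr ⟨p, hp, hy', hy⟩]
  trans := by
    rintro y y' y'' (rfl | ⟨p, hp, hy, hy'⟩) (rfl | ⟨q, hq, hy'q, hy''⟩)
    · exact .inl rfl
    · exact .inr ⟨q, hq, hy'q, hy''⟩
    · exact .inr ⟨p, hp, hy, hy'⟩
    · obtain rfl := hD.elim_set hp hq y' hy' hy'q
      exact .inr ⟨p, hp, hy, hy''⟩

lemma setOf_tileRel_eq {S : ι → Set X} {D : Set ι} (hD : D.PairwiseDisjoint S) {p : ι}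
    (hp : p ∈ D) {x : X} (hx : x ∈ S p) : {y | tileRel S D y x} = S p := by
  ext y
  refine ⟨?_, fun hy => .inr ⟨p, hp, hy, hx⟩⟩
  rintro (rfl | ⟨q, hq, hy, hxq⟩)
  · exact hx
  · rwa [hD.elim_set hp hq x hx hxq]

/-- The part of `X` covered by the first `n` steps of the greedy selection from `G`: step `n` adds
the sets `S (n, a)` with `(n, a) ∈ G` that are disjoint from everything covered before. -/
def greedyCover (S : ℕ × ι → Set X) (G : Set (ℕ × ι)) : ℕ → Set X
  | 0 => ∅
  | n + 1 => greedyCover S G n ∪ ⋃ p ∈ {p ∈ G | p.1 = n ∧ Disjoint (S p) (greedyCover S G n)}, S p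

/-- The index set chosen by the greedy selection of disjoint sets among `S p`, `p ∈ G`. -/
def greedySelection (S : ℕ × ι → Set X) (G : Set (ℕ × ι)) : Set (ℕ × ι) :=
  {p ∈ G | Disjoint (S p) (greedyCover S G p.1)}

lemma greedySelection_subset (S : ℕ × ι → Set X) (G : Set (ℕ × ι)) : greedySelection S G ⊆ G :=
  sep_subset _ _

lemma greedyCover_mono (S : ℕ × ι → Set X) (G : Set (ℕ × ι)) : Monotone (greedyCover S G) :=
  monotone_nat_of_le_succ fun _ => subset_union_left

lemma subset_greedyCover {S : ℕ × ι → Set X} {G : Set (ℕ × ι)} {p : ℕ × ι}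
    (hp : p ∈ greedySelection S G) {n : ℕ} (hn : p.1 < n) : S p ⊆ greedyCover S G n := by
  have hstep : p ∈ {q ∈ G | q.1 = p.1 ∧ Disjoint (S q) (greedyCover S G p.1)} :=
    ⟨hp.1, rfl, hp.2⟩
  exact (subset_union_of_subset_right (subset_biUnion_of_mem (u := S) hstep) _).trans
    (greedyCover_mono S G hn)

lemma greedyCover_subset (S : ℕ × ι → Set X) (G : Set (ℕ × ι)) (n : ℕ) :
    greedyCover S G n ⊆ ⋃ p ∈ greedySelection S G, S p := by
  induction n with
  | zero => exact empty_subset _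
  | succ n ih =>
    refine union_subset ih (biUnion_subset_biUnion_left ?_)
    rintro p ⟨hp, rfl, hdisj⟩
    exact ⟨hp, hdisj⟩

lemma pairwiseDisjoint_greedySelection {S : ℕ × ι → Set X} (G : Set (ℕ × ι))
    (hS : ∀ n ⦃a b⦄, a ≠ b → Disjoint (S (n, a)) (S (n, b))) :
    (greedySelection S G).PairwiseDisjoint S := by
  rintro ⟨m, a⟩ hp ⟨n, b⟩ hq hne
  rcases lt_trichotomy m n with h | rfl | h
  · exact (hq.2.mono_right (subset_greedyCover hp h)).symm
  · exact hS m fun hab => hne (by rw [hab])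
  · exact hp.2.mono_right (subset_greedyCover hq h)

lemma not_disjoint_biUnion_greedySelection {S : ℕ × ι → Set X} {G : Set (ℕ × ι)} {p : ℕ × ι}
    (hp : p ∈ G) (hne : (S p).Nonempty) :
    ¬ Disjoint (S p) (⋃ q ∈ greedySelection S G, S q) := by
  intro hdisj
  have hsel : p ∈ greedySelection S G := ⟨hp, hdisj.mono_right (greedyCover_subset S G p.1)⟩
  exact hne.ne_empty (disjoint_self.1 (hdisj.mono_right (subset_biUnion_of_mem (u := S) hsel)))

end Greedy

namespace IsTileSystem

variable [MeasurableSpace X] {E : X → X → Prop} {g : ℕ → X → X} {S : ℕ × X → Set X}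

lemma rel_of_mem (hS : IsTileSystem E S) (hE : Equivalence E) {p : ℕ × X} {y y' : X}
    (hy : y ∈ S p) (hy' : y' ∈ S p) : E y y' :=
  hE.trans (hE.symm (hS.rel hy)) (hS.rel hy')

lemma measurableSet_exists_mem_mem (hS : IsTileSystem E S) (hE : Equivalence E)
    (hg : IsBorelEnumeration E g) {D : Set (ℕ × X)} (hD : MeasurableSet D) :
    MeasurableSet {q : X × X | ∃ p ∈ D, q.1 ∈ S p ∧ q.2 ∈ S p} := by
  have heq : {q : X × X | ∃ p ∈ D, q.1 ∈ S p ∧ q.2 ∈ S p} = ⋃ (m) (n),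
      {q | (m, g n q.1) ∈ D ∧ q.1 ∈ S (m, g n q.1) ∧ q.2 ∈ S (m, g n q.1)} := by
    ext q
    simp only [mem_ofPred_eq, mem_iUnion]
    refine ⟨fun ⟨⟨m, x⟩, hp, hq, hq'⟩ => ?_, fun ⟨m, n, h⟩ => ⟨_, h⟩⟩
    obtain ⟨n, rfl⟩ := hg.exists_eq (hE.symm (hS.rel hq))
    exact ⟨m, n, hp, hq, hq'⟩
  rw [heq]
  refine .iUnion fun m => .iUnion fun n => ?_
  have hroot : Measurable fun q : X × X => (m, g n q.1) :=
    measurable_const.prodMk ((hg.measurable n).comp measurable_fst)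
  exact (hroot hD).inter (((hS.comp hroot).measurableSet_mem measurable_fst).inter
    ((hS.comp hroot).measurableSet_mem measurable_snd))

lemma measurableSet_biUnion (hS : IsTileSystem E S) (hE : Equivalence E)
    (hg : IsBorelEnumeration E g) {D : Set (ℕ × X)} (hD : MeasurableSet D) :
    MeasurableSet (⋃ p ∈ D, S p) := by
  convert (measurable_id.prodMk measurable_id) (hS.measurableSet_exists_mem_mem hE hg hD) using 1
  ext y
  simp

lemma measurableSet_greedyStep (hS : IsTileSystem E S) (hg : IsBorelEnumeration E g)
    {G : Set (ℕ × X)} (hG : MeasurableSet G) {C : Set X} (hC : MeasurableSet C) (n : ℕ) :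
    MeasurableSet {p ∈ G | p.1 = n ∧ Disjoint (S p) C} := by
  simp only [disjoint_iff_inter_eq_empty, ← not_nonempty_iff_eq_empty]
  exact hG.inter ((measurable_fst (measurableSet_singleton n)).inter
    ((hS.inter (T := fun _ => C) (measurable_snd hC)).measurableSet_nonempty hg).compl)

lemma measurableSet_greedyCover (hS : IsTileSystem E S) (hE : Equivalence E)
    (hg : IsBorelEnumeration E g) {G : Set (ℕ × X)} (hG : MeasurableSet G) (n : ℕ) :
    MeasurableSet (greedyCover S G n) := by
  induction n with
  | zero => exact .empty
  | succ n ih =>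
    exact ih.union (hS.measurableSet_biUnion hE hg (hS.measurableSet_greedyStep hg hG ih n))

lemma measurableSet_greedySelection (hS : IsTileSystem E S) (hE : Equivalence E)
    (hg : IsBorelEnumeration E g) {G : Set (ℕ × X)} (hG : MeasurableSet G) :
    MeasurableSet (greedySelection S G) := by
  have heq : greedySelection S G =
      ⋃ n, {p ∈ G | p.1 = n ∧ Disjoint (S p) (greedyCover S G n)} := by
    ext p
    simp [greedySelection]
  rw [heq]
  exact .iUnion fun n =>
    hS.measurableSet_greedyStep hg hG (hS.measurableSet_greedyCover hE hg hG n) n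

lemma exists_maximal (hS : IsTileSystem E S) (hE : Equivalence E) (hg : IsBorelEnumeration E g)
    {G : Set (ℕ × X)} (hG : MeasurableSet G) :
    ∃ D ⊆ G, MeasurableSet D ∧ D.PairwiseDisjoint S ∧
      ∀ p ∈ G, (S p).Nonempty → ¬ Disjoint (S p) (⋃ q ∈ D, S q) :=
  ⟨greedySelection S G, greedySelection_subset S G, hS.measurableSet_greedySelection hE hg hG,
    pairwiseDisjoint_greedySelection G hS.disjoint_layer,
    fun _ => not_disjoint_biUnion_greedySelection⟩

lemma isFinSubequivOn_tileRel [MeasurableEq X] (hS : IsTileSystem E S) (hE : Equivalence E)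
    (hg : IsBorelEnumeration E g) {D : Set (ℕ × X)} (hD : MeasurableSet D)
    (hdisj : D.PairwiseDisjoint S) : IsFinSubequivOn E (⋃ p ∈ D, S p) (tileRel S D) := by
  refine ⟨equivalence_tileRel hdisj, (measurableSet_eq_fun measurable_fst measurable_snd).union
    (hS.measurableSet_exists_mem_mem hE hg hD), ?_, fun x => ?_⟩
  · rintro x y (hxy | ⟨p, hp, hx, hy⟩)
    · exact .inl hxy
    · exact .inr ⟨hS.rel_of_mem hE hx hy, mem_biUnion hp hx, mem_biUnion hp hy⟩
  · by_cases hx : ∃ p ∈ D, x ∈ S p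
    · obtain ⟨p, hp, hxp⟩ := hx
      have hsymm (y : X) : tileRel S D x y ↔ tileRel S D y x :=
        ⟨(equivalence_tileRel hdisj).symm, (equivalence_tileRel hdisj).symm⟩
      simp_rw [hsymm, setOf_tileRel_eq hdisj hp hxp]
      exact hS.finite p
    · refine (finite_singleton x).subset ?_
      rintro y (rfl | ⟨p, hp, hxp, -⟩)
      exacts [rfl, absurd ⟨p, hp, hxp⟩ hx]

end IsTileSystem

section Smoothness

lemma abs_log_lt_iff {s c : ℝ} (hs : 0 < s) :
    |Real.log s| < c ↔ s ∈ Ioo (Real.exp (-c)) (Real.exp c) := by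
  rw [abs_lt, Real.lt_log_iff_exp_lt hs, Real.log_lt_iff_lt_exp hs, mem_Ioo]

/-- The union of the `E`-classes that meet `W`. -/
def saturation (E : X → X → Prop) (W : Set X) : Set X :=
  {x | ∃ y ∈ W, E x y}

/-- The points of `R` in the `E`-class of `x` whose `ρ`-mass relative to `x` lies between `e⁻¹`
and `e`. -/
def nearby (E : X → X → Prop) (ρ : X → X → ℝ) (R : Set X) (x : X) : Set X :=
  {y ∈ R | E x y ∧ |Real.log (ρ y x)| < 1}

section Invariant

variable {E : X → X → Prop} {V W : Set X}

lemma mem_saturation_iff_of_rel (hE : Equivalence E) {x y : X} (hxy : E x y) :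
    x ∈ saturation E W ↔ y ∈ saturation E W :=
  ⟨fun ⟨z, hz, hxz⟩ => ⟨z, hz, hE.trans (hE.symm hxy) hxz⟩,
    fun ⟨z, hz, hyz⟩ => ⟨z, hz, hE.trans hxy hyz⟩⟩

lemma eInvariant_saturation (hE : Equivalence E) (W : Set X) : EInvariant E (saturation E W) :=
  fun _ _ hxy => (mem_saturation_iff_of_rel hE hxy).1

lemma EInvariant.inter (hV : EInvariant E V) (hW : EInvariant E W) : EInvariant E (V ∩ W) :=
  fun _ _ hxy hx => ⟨hV hxy hx.1, hW hxy hx.2⟩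

lemma EInvariant.compl (hE : Equivalence E) (hV : EInvariant E V) : EInvariant E Vᶜ :=
  fun _ _ hxy hx hy => hx (hV (hE.symm hxy) hy)

end Invariant

variable [MeasurableSpace X] {E : X → X → Prop} {g : ℕ → X → X} {ρ : X → X → ℝ} {W : Set X}

lemma IsBorelEnumeration.measurableSet_saturation (hg : IsBorelEnumeration E g)
    (hW : MeasurableSet W) : MeasurableSet (saturation E W) := by
  have heq : saturation E W = ⋃ n, g n ⁻¹' W := by
    ext x
    simp only [saturation, mem_ofPred_eq, mem_iUnion, mem_preimage]
    refine ⟨fun ⟨y, hy, hxy⟩ => ?_, fun ⟨n, hn⟩ => ⟨_, hn, hg.rel n x⟩⟩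
    obtain ⟨n, rfl⟩ := hg.exists_eq hxy
    exact ⟨n, hy⟩
  rw [heq]
  exact .iUnion fun n => hg.measurable n hW

lemma IsBorelEnumeration.exists_measurable_selector (hg : IsBorelEnumeration E g)
    (hW : MeasurableSet W) :
    ∃ φ : X → X, Measurable φ ∧ (∀ x, E x (φ x)) ∧ ∀ x ∈ saturation E W, φ x ∈ W := by
  classical
  have hex (x : X) : ∃ n, x ∈ saturation E W → g n x ∈ W := by
    by_cases hx : x ∈ saturation E W
    · obtain ⟨y, hy, hxy⟩ := hx
      obtain ⟨n, rfl⟩ := hg.exists_eq hxy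
      exact ⟨n, fun _ => hy⟩
    · exact ⟨0, fun h => absurd h hx⟩
  have hmeas (n : ℕ) : MeasurableSet {x | x ∈ saturation E W → g n x ∈ W} := by
    simp only [imp_iff_not_or, ofPred_or]
    exact (hg.measurableSet_saturation hW).compl.union (hg.measurable n hW)
  have hgm : Measurable fun p : ℕ × X => g p.1 p.2 :=
    measurable_from_prod_countable_right hg.measurable
  exact ⟨fun x => g (Nat.find (hex x)) x,
    hgm.comp ((measurable_find hex hmeas).prodMk measurable_id), fun x => hg.rel _ x,
    fun x => Nat.find_spec (hex x)⟩

lemma IsBorelEnumeration.exists_measurable_index [MeasurableEq X] (hg : IsBorelEnumeration E g)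
    {φ : X → X} (hφ : Measurable φ) (hφE : ∀ x, E (φ x) x) :
    ∃ k : X → ℕ, Measurable k ∧ ∀ x y, φ x = φ y → k x = k y → x = y := by
  classical
  have hex (x : X) : ∃ n, g n (φ x) = x := hg.exists_eq (hφE x)
  refine ⟨fun x => Nat.find (hex x), measurable_find hex fun n =>
    measurableSet_eq_fun ((hg.measurable n).comp hφ) measurable_id, fun x y hxy hk => ?_⟩
  calc x = g (Nat.find (hex x)) (φ x) := (Nat.find_spec (hex x)).symm
    _ = g (Nat.find (hex y)) (φ y) := congrArg₂ g hk hxy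
    _ = y := Nat.find_spec (hex y)

lemma IsCocycle.log_eq_add (hρ : IsCocycle E ρ) {x y z : X} (hxy : E x y) (hyz : E y z) :
    Real.log (ρ x z) = Real.log (ρ x y) + Real.log (ρ y z) := by
  rw [hρ.2.2 hxy hyz, Real.log_mul (hρ.2.1 hxy).ne' (hρ.2.1 hyz).ne']

lemma isBorelFamily_nearby (hE : IsCBER E) (hρ : IsCocycle E ρ) (hW : MeasurableSet W) :
    IsBorelFamily E id (nearby E ρ W) where
  measurable_root := measurable_id
  measurableSet := (measurable_snd hW).inter <| hE.2.1.inter <|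
    measurableSet_lt (Real.measurable_log.comp (hρ.1.comp measurable_swap)).abs measurable_const
  rel _ _ hy := hy.2.1

lemma SmoothOn.mono {V : Set X} (hW : SmoothOn E ρ W) (hVW : V ⊆ W) : SmoothOn E ρ V := by
  obtain ⟨U, hU, hU1, hU0, c, hc, hcol⟩ := hW
  exact ⟨U, hU, hU1, hU0, c, hc, fun x y hx hy => hcol (hVW hx) (hVW hy)⟩

lemma exists_measurable_coloring_nearby [StandardBorelSpace X] (hE : IsCBER E)
    (hg : IsBorelEnumeration E g) (hρ : IsCocycle E ρ) (hW : MeasurableSet W)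
    (hfin : ∀ x ∈ W, (nearby E ρ W x).Finite) :
    ∃ c : X → ℕ, Measurable c ∧ ∀ ⦃x y⦄, x ∈ W → x ≠ y → y ∈ nearby E ρ W x → c x ≠ c y := by
  obtain ⟨c, hc, hcol⟩ := exists_measurable_coloring hg
    ((isBorelFamily_nearby hE hρ hW).inter (T := fun x => {_y | x ∈ W}) (measurable_fst hW))
    fun x => by
      by_cases hx : x ∈ W
      · exact (hfin x hx).inter_of_left _
      · simp [hx]
  exact ⟨c, hc, fun x y hx hne hy => hcol hne ⟨hy, hx⟩⟩

/- A point is determined by its representative in `W` and its index over that representative, so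
`ρ`-close points with the same index have distinct representatives. These are `ρ`-close as well
once both points have nearly the same mass relative to their representatives. -/
lemma smoothOn_saturation [StandardBorelSpace X] (hE : IsCBER E) (hg : IsBorelEnumeration E g)
    (hρ : IsCocycle E ρ) (hW : MeasurableSet W) (hfin : ∀ x ∈ W, (nearby E ρ W x).Finite) :
    SmoothOn E ρ (saturation E W) := by
  obtain ⟨c, hc, hcol⟩ := exists_measurable_coloring_nearby hE hg hρ hW hfin
  obtain ⟨φ, hφ, hφE, hφW⟩ := hg.exists_measurable_selector hW
  obtain ⟨k, hk, hkφ⟩ := hg.exists_measurable_index hφ fun x => hE.1.symm (hφE x)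
  have hlog : Measurable fun x => ⌊2 * Real.log (ρ (φ x) x)⌋ := Int.measurable_floor.comp
    ((Real.measurable_log.comp (hρ.1.comp (hφ.prodMk measurable_id))).const_mul 2)
  refine ⟨Ioo (Real.exp (-(1 / 2))) (Real.exp (1 / 2)), isOpen_Ioo,
    (abs_log_lt_iff one_pos).1 (by norm_num), fun s hs => (Real.exp_pos _).trans hs.1,
    fun x => Encodable.encode (k x, ⌊2 * Real.log (ρ (φ x) x)⌋, c (φ x)),
    (measurable_of_countable Encodable.encode).comp (hk.prodMk (hlog.prodMk (hc.comp hφ))), ?_⟩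
  intro x y hx hy hne hxy hρxy heq
  obtain ⟨hkxy, hfloor, hcxy⟩ := by simpa only [Prod.mk.injEq] using Encodable.encode_injective heq
  have hφne : φ y ≠ φ x := fun h => hne (hkφ x y h.symm hkxy)
  have hyφ : E y (φ x) := hE.1.trans (hE.1.symm hxy) (hφE x)
  have hφφ : E (φ y) (φ x) := hE.1.trans (hE.1.symm (hφE y)) hyφ
  have hclose : |Real.log (ρ (φ x) (φ y))| < 1 := by
    have hfloor := Int.abs_sub_lt_one_of_floor_eq_floor hfloor
    have hlogxy := (abs_log_lt_iff (hρ.2.1 hxy)).2 hρxy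
    have hsum := hρ.log_eq_add (hE.1.symm hφφ) (hE.1.symm (hφE y))
    rw [hρ.log_eq_add (hE.1.symm (hφE x)) hxy] at hsum
    rw [abs_lt] at hfloor hlogxy ⊢
    constructor <;> linarith
  exact hcol (hφW y hy) hφne ⟨hφW x hx, hφφ, hclose⟩ hcxy.symm

lemma smoothOn_saturation_inter [StandardBorelSpace X] (hE : IsCBER E)
    (hg : IsBorelEnumeration E g) (hρ : IsCocycle E ρ) {R₁ R₂ : Set X} (hR₁ : MeasurableSet R₁)
    (hR₂ : MeasurableSet R₂)
    (hfin : ∀ ⦃x y⦄, E x y → (nearby E ρ R₁ x).Infinite → (nearby E ρ R₂ y).Finite) :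
    SmoothOn E ρ (saturation E R₁ ∩ saturation E R₂) := by
  set M := saturation E {x | (nearby E ρ R₁ x).Infinite}
  have hM : MeasurableSet M := hg.measurableSet_saturation
    ((isBorelFamily_nearby hE hρ hR₁).measurableSet_infinite hg)
  have hMinv {x y : X} (hxy : E x y) : x ∈ M ↔ y ∈ M := mem_saturation_iff_of_rel hE.1 hxy
  refine (smoothOn_saturation hE hg hρ (W := R₁ \ M ∪ R₂ ∩ M)
    ((hR₁.diff hM).union (hR₂.inter hM)) ?_).mono ?_
  · rintro x (⟨-, hxM⟩ | ⟨-, hxM⟩)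
    · have hfinx : (nearby E ρ R₁ x).Finite :=
        by_contra fun hinf => hxM ⟨x, hinf, hE.1.refl x⟩
      exact hfinx.subset fun y ⟨hy, hxy, hlog⟩ =>
        ⟨(hy.resolve_right fun h => hxM ((hMinv hxy).2 h.2)).1, hxy, hlog⟩
    · have ⟨z, hinf, hxz⟩ := hxM
      exact (hfin (hE.1.symm hxz) hinf).subset fun y ⟨hy, hxy, hlog⟩ =>
        ⟨(hy.resolve_left fun h => h.2 ((hMinv hxy).1 hxM)).1, hxy, hlog⟩
  · rintro x ⟨⟨y, hy, hxy⟩, z, hz, hxz⟩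
    by_cases hxM : x ∈ M
    · exact ⟨z, .inr ⟨hz, (hMinv hxz).1 hxM⟩, hxz⟩
    · exact ⟨y, .inl ⟨hy, fun h => hxM ((hMinv hxy).2 h)⟩, hxy⟩

end Smoothness

section Balance

lemma exists_finset_lt_sum {ι : Type*} {a : ι → ℝ} {I : Set ι} {β : ℝ} (hI : I.Infinite)
    (hβ : 0 < β) (ha : ∀ i ∈ I, β ≤ a i) (K : ℝ) :
    ∃ s : Finset ι, ↑s ⊆ I ∧ K < ∑ i ∈ s, a i := by
  obtain ⟨n, hn⟩ := exists_nat_gt (K / β)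
  obtain ⟨s, hsI, rfl⟩ := hI.exists_subset_card_eq n
  refine ⟨s, hsI, ?_⟩
  calc K < s.card * β := (div_lt_iff₀ hβ).1 hn
    _ = s.card • β := (nsmul_eq_mul _ _).symm
    _ ≤ ∑ i ∈ s, a i := s.card_nsmul_le_sum a β fun i hi => ha i (hsI hi)

lemma exists_subset_sum_mem_Ico {ι : Type*} {a : ι → ℝ} {δ M : ℝ} (hM : 0 < M) {s : Finset ι}
    (ha : ∀ i ∈ s, a i ≤ δ) (hs : M ≤ ∑ i ∈ s, a i) :
    ∃ t ⊆ s, ∑ i ∈ t, a i ∈ Ico (M - δ) M := by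
  classical
  induction s using Finset.induction with
  | empty => exact absurd hs (by simpa using hM)
  | insert i s hi ih =>
    rw [Finset.forall_mem_insert] at ha
    by_cases hsM : M ≤ ∑ j ∈ s, a j
    · obtain ⟨t, hts, ht⟩ := ih ha.2 hsM
      exact ⟨t, hts.trans (Finset.subset_insert i s), ht⟩
    · rw [Finset.sum_insert hi] at hs
      exact ⟨s, Finset.subset_insert i s, by linarith [ha.1], not_le.1 hsM⟩

/- First take `t` so large that an error of `δ` in a sum of size `∑ t` is negligible; then remove
elements from a large `s` one at a time until its sum falls below `∑ t`. -/
lemma exists_finsets_sum_mem_Ioo {ι : Type*} {a : ι → ℝ} {I J : Set ι} (hI : I.Infinite)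
    (hJ : J.Infinite) {α β δ r : ℝ} (hα : 0 < α) (hβ : 0 < β) (hr : r < 1)
    (haI : ∀ i ∈ I, a i ∈ Icc α δ) (haJ : ∀ j ∈ J, β ≤ a j) :
    ∃ s t : Finset ι, ↑s ⊆ I ∧ ↑t ⊆ J ∧
      ∑ i ∈ s, a i ∈ Ioo (r * ∑ j ∈ t, a j) (∑ j ∈ t, a j) := by
  obtain ⟨i, hi⟩ := hI.nonempty
  have hδ : 0 < δ := hα.trans_le ((haI i hi).1.trans (haI i hi).2)
  obtain ⟨t, htJ, ht⟩ := exists_finset_lt_sum hJ hβ haJ (δ / (1 - r))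
  have hpos : 0 < ∑ j ∈ t, a j := (div_pos hδ (sub_pos.2 hr)).trans ht
  obtain ⟨s, hsI, hs⟩ := exists_finset_lt_sum hI hα (fun i hi => (haI i hi).1) (∑ j ∈ t, a j)
  obtain ⟨s', hs's, hlow, hhigh⟩ :=
    exists_subset_sum_mem_Ico hpos (fun i hi => (haI i (hsI hi)).2) hs.le
  refine ⟨s', t, (Finset.coe_subset.2 hs's).trans hsI, htJ, ?_, hhigh⟩
  rw [div_lt_iff₀ (sub_pos.2 hr)] at ht
  linarith

/-- The set `T` is balanced for `A` with tolerance `r` if `r < |A ∩ T|^{T ∖ A}_ρ < 1`, the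
`ρ`-sizes being computed at the point `x`. -/
def IsBalanced (ρ : X → X → ℝ) (A : Set X) (r : ℝ) (T : Set X) (x : X) : Prop :=
  relSize ρ (A ∩ T) (T \ A) x ∈ Ioo (ENNReal.ofReal r) 1

lemma IsBalanced.nonempty {ρ : X → X → ℝ} {A T : Set X} {r : ℝ} {x : X}
    (hbal : IsBalanced ρ A r T x) : T.Nonempty := by
  rw [nonempty_iff_ne_empty]
  rintro rfl
  simpa [relSize, eSize] using hbal.1

lemma eSize_coe_finset {ρ : X → X → ℝ} {s : Finset X} {x : X} (h : ∀ y ∈ s, 0 ≤ ρ y x) :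
    eSize ρ (s : Set X) x = ENNReal.ofReal (∑ y ∈ s, ρ y x) := by
  rw [ENNReal.ofReal_sum_of_nonneg h]
  exact s.tsum_subtype' fun y => ENNReal.ofReal (ρ y x)

lemma isBalanced_union {ρ : X → X → ℝ} {A : Set X} {r : ℝ} {x : X} {s t : Finset X}
    (hsA : ↑s ⊆ A) (htA : ↑t ⊆ Aᶜ) (hs : ∀ y ∈ s, 0 ≤ ρ y x) (ht : ∀ y ∈ t, 0 ≤ ρ y x)
    (hr : 0 ≤ r)
    (hsum : ∑ y ∈ s, ρ y x ∈ Ioo (r * ∑ y ∈ t, ρ y x) (∑ y ∈ t, ρ y x)) :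
    IsBalanced ρ A r (s ∪ t) x := by
  have hpos : 0 < ∑ y ∈ t, ρ y x :=
    (mul_nonneg hr (Finset.sum_nonneg ht)).trans_lt (hsum.1.trans hsum.2)
  have hA : A ∩ (s ∪ t) = (s : Set X) := by
    rw [inter_union_distrib_left, inter_eq_right.2 hsA,
      disjoint_iff_inter_eq_empty.1 (disjoint_compl_right.mono_right htA), union_empty]
  have hAc : ((s : Set X) ∪ t) \ A = t := by
    rw [union_sdiff_distrib, sdiff_eq_empty.2 hsA, empty_union, sdiff_eq, inter_eq_left.2 htA]
  have hratio : relSize ρ (A ∩ (s ∪ t)) ((s ∪ t) \ A) x =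
      ENNReal.ofReal ((∑ y ∈ s, ρ y x) / ∑ y ∈ t, ρ y x) := by
    rw [relSize, hA, hAc, eSize_coe_finset hs, eSize_coe_finset ht, ENNReal.ofReal_div_of_pos hpos]
  rw [IsBalanced, hratio]
  refine ⟨(ENNReal.ofReal_lt_ofReal_iff_of_nonneg hr).2 ((lt_div_iff₀ hpos).2 hsum.1), ?_⟩
  rw [ENNReal.ofReal_lt_one, div_lt_one hpos]
  exact hsum.2

variable [MeasurableSpace X] {E : X → X → Prop} {g : ℕ → X → X} {ρ : X → X → ℝ} {A : Set X}
  {r : ℝ}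

lemma IsCocycle.eSize_eq_mul (hρ : IsCocycle E ρ) {T : Set X} {x y : X} (hT : ∀ z ∈ T, E z x)
    (hxy : E x y) : eSize ρ T y = eSize ρ T x * ENNReal.ofReal (ρ x y) := by
  rw [eSize, eSize, ← ENNReal.tsum_mul_right]
  refine tsum_congr fun z => ?_
  rw [hρ.2.2 (hT z z.2) hxy, ENNReal.ofReal_mul (hρ.2.1 (hT z z.2)).le]

lemma IsBalanced.of_rel {T : Set X} {x y : X} (hbal : IsBalanced ρ A r T x)
    (hρ : IsCocycle E ρ) (hT : ∀ z ∈ T, E z x) (hxy : E x y) : IsBalanced ρ A r T y := by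
  rwa [IsBalanced, relSize, hρ.eSize_eq_mul (fun z hz => hT z hz.2) hxy,
    hρ.eSize_eq_mul (fun z hz => hT z hz.1) hxy, ENNReal.mul_div_mul_right _ _
      (ENNReal.ofReal_pos.2 (hρ.2.1 hxy)).ne' ENNReal.ofReal_ne_top]

lemma IsBorelFamily.measurableSet_isBalanced {α : Type*} [MeasurableSpace α] [MeasurableEq X]
    {u : α → X} {S : α → Set X} (hS : IsBorelFamily E u S) (hg : IsBorelEnumeration E g)
    (hρ : Measurable fun p : X × X => ρ p.1 p.2) (hA : MeasurableSet A) (r : ℝ) :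
    MeasurableSet {a | IsBalanced ρ A r (S a) (u a)} := by
  have hweight : Measurable (Function.uncurry fun a y => ENNReal.ofReal (ρ y (u a))) :=
    (hρ.comp (measurable_snd.prodMk (hS.measurable_root.comp measurable_fst))).ennreal_ofReal
  have hmeas {R : Set X} (hR : MeasurableSet R) : Measurable fun a => eSize ρ (S a ∩ R) (u a) :=
    (hS.inter (T := fun _ => R) (measurable_snd hR)).measurable_tsum hg hweight
  simp only [IsBalanced, relSize, inter_comm A, sdiff_eq]
  exact (hmeas hA).div (hmeas hA.compl) measurableSet_Ioo

lemma exists_isBalanced_of_infinite_nearby (hE : Equivalence E) (hρ : IsCocycle E ρ)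
    {R₁ R₂ : Set X} (hR₁ : R₁ ⊆ A) (hR₂ : R₂ ⊆ Aᶜ) {x y : X} (hxy : E x y)
    (hx : (nearby E ρ R₁ x).Infinite) (hy : (nearby E ρ R₂ y).Infinite) (hr0 : 0 ≤ r)
    (hr1 : r < 1) :
    ∃ T : Finset X, ↑T ⊆ R₁ ∪ R₂ ∧ (∀ z ∈ T, E x z) ∧ IsBalanced ρ A r T x := by
  classical
  have hyx : E y x := hE.symm hxy
  have hI (z : X) (hz : z ∈ nearby E ρ R₁ x) : ρ z x ∈ Icc (Real.exp (-1)) (Real.exp 1) :=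
    Ioo_subset_Icc_self ((abs_log_lt_iff (hρ.2.1 (hE.symm hz.2.1))).1 hz.2.2)
  have hJ (z : X) (hz : z ∈ nearby E ρ R₂ y) : Real.exp (-1) * ρ y x ≤ ρ z x := by
    have hzy : E z y := hE.symm hz.2.1
    rw [hρ.2.2 hzy hyx]
    exact mul_le_mul_of_nonneg_right ((abs_log_lt_iff (hρ.2.1 hzy)).1 hz.2.2).1.le (hρ.2.1 hyx).le
  obtain ⟨s, t, hs, ht, hsum⟩ := exists_finsets_sum_mem_Ioo hx hy (Real.exp_pos (-1))
    (mul_pos (Real.exp_pos (-1)) (hρ.2.1 hyx)) hr1 hI hJ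
  have hsE (z : X) (hz : z ∈ s) : E x z := (hs hz).2.1
  have htE (z : X) (hz : z ∈ t) : E x z := hE.trans hxy (ht hz).2.1
  have hsR : ↑s ⊆ R₁ := fun z hz => (hs hz).1
  have htR : ↑t ⊆ R₂ := fun z hz => (ht hz).1
  refine ⟨s ∪ t, ?_, ?_, ?_⟩
  · rw [Finset.coe_union]
    exact union_subset_union hsR htR
  · exact fun z hz => (Finset.mem_union.1 hz).elim (hsE z) (htE z)
  · rw [Finset.coe_union]
    exact isBalanced_union (hsR.trans hR₁) (htR.trans hR₂)
      (fun z hz => (hρ.2.1 (hE.symm (hsE z hz))).le)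
      (fun z hz => (hρ.2.1 (hE.symm (htE z hz))).le) hr0 hsum

end Balance

section MaximalTiling

variable {E : X → X → Prop} {ρ : X → X → ℝ} {A C₀ : Set X} {r : ℝ} {S : ℕ × X → Set X}

lemma EInvariant.subset_inter_or_subset_inter {B : Set X} (hB : EInvariant E B) {x : X}
    (hxB : x ∈ B) (hx : x ∉ saturation E (A \ C₀) ∩ saturation E (C₀ᶜ \ A)) :
    A ∩ {y | E x y} ⊆ C₀ ∩ B ∨ {y | E x y} \ A ⊆ C₀ ∩ B := by
  refine (not_and_or.1 hx).imp (fun h y hy => ⟨?_, hB hy.2 hxB⟩) fun h y hy => ⟨?_, hB hy.1 hxB⟩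
  · exact by_contra fun hyC => h ⟨y, ⟨hy.1, hyC⟩, hy.2⟩
  · exact by_contra fun hyC => h ⟨y, ⟨hyC, hy.2⟩, hy.1⟩

variable [MeasurableSpace X]

lemma IsTileSystem.finite_nearby_of_maximal (hS : IsTileSystem E S) (hE : Equivalence E)
    (hρ : IsCocycle E ρ) (hr0 : 0 ≤ r) (hr1 : r < 1)
    (hmax : ∀ p, IsBalanced ρ A r (S p) p.2 → (S p).Nonempty → ¬ Disjoint (S p) C₀)
    ⦃x y : X⦄ (hxy : E x y) (hx : (nearby E ρ (A \ C₀) x).Infinite) :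
    (nearby E ρ (C₀ᶜ \ A) y).Finite := by
  by_contra hy
  obtain ⟨T, hTR, hTE, hbal⟩ := exists_isBalanced_of_infinite_nearby hE hρ sdiff_subset
    (fun z hz => hz.2) hxy hx hy hr0 hr1
  obtain ⟨m, hm⟩ := hS.exists_eq hTE
  have hdisj : Disjoint (T : Set X) C₀ :=
    (disjoint_sdiff_left.union_left
      (disjoint_compl_left.mono_left (sdiff_subset (s := C₀ᶜ)))).mono_left hTR
  rw [← hm] at hbal hdisj
  exact hmax (m, x) hbal hbal.nonempty hdisj

lemma IsTileSystem.biUnion_root_mem (hS : IsTileSystem E S) (hE : Equivalence E)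
    {B : Set X} (hB : EInvariant E B) (D : Set (ℕ × X)) :
    ⋃ p ∈ D ∩ Prod.snd ⁻¹' B, S p = (⋃ p ∈ D, S p) ∩ B := by
  ext y
  simp only [mem_inter_iff, mem_preimage, mem_iUnion₂, exists_prop]
  constructor
  · rintro ⟨p, ⟨hp, hpB⟩, hy⟩
    exact ⟨⟨p, hp, hy⟩, hB (hS.rel hy) hpB⟩
  · rintro ⟨⟨p, hp, hy⟩, hyB⟩
    exact ⟨p, ⟨hp, hB (hE.symm (hS.rel hy)) hyB⟩, hy⟩

lemma IsTileSystem.isBalanced_tileRel (hS : IsTileSystem E S) (hE : Equivalence E)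
    (hρ : IsCocycle E ρ) {D : Set (ℕ × X)} (hdisj : D.PairwiseDisjoint S)
    (hbal : ∀ p ∈ D, IsBalanced ρ A r (S p) p.2) {x : X} (hx : x ∈ ⋃ p ∈ D, S p) :
    IsBalanced ρ A r {y | tileRel S D y x} x := by
  obtain ⟨p, hp, hxp⟩ := mem_iUnion₂.1 hx
  rw [setOf_tileRel_eq hdisj hp hxp]
  exact (hbal p hp).of_rel hρ (fun z hz => hE.symm (hS.rel hz)) (hS.rel hxp)

end MaximalTiling

/-- Approximation lemma for coboundaries: given Borel `A ⊆ X` and `0 < r < 1`, there are an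
`E`-invariant Borel set `B`, a Borel set `C ⊆ B`, and a finite Borel subequivalence relation
`F` of `E ↾ C` such that `ρ ↾ (E ↾ Bᶜ)` is smooth,
`r < |A ∩ [x]_F|^{[x]_F ∖ A}_ρ < 1` for all `x ∈ C`, and for each `x ∈ B` either
`A ∩ [x]_E ⊆ C` or `[x]_E ∖ A ⊆ C`. -/
theorem stmt17 [MeasurableSpace X] [StandardBorelSpace X]
    (E : X → X → Prop) (hE : IsCBER E)
    (ρ : X → X → ℝ) (hρ : IsCocycle E ρ)
    (A : Set X) (hA : MeasurableSet A) (r : ℝ) (hr0 : 0 < r) (hr1 : r < 1) :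
    ∃ B C : Set X, MeasurableSet B ∧ EInvariant E B ∧ MeasurableSet C ∧ C ⊆ B ∧
      ∃ F : X → X → Prop, IsFinSubequivOn E C F ∧
        SmoothOn E ρ Bᶜ ∧
        (∀ x ∈ C, ENNReal.ofReal r < relSize ρ (A ∩ {y | F y x}) ({y | F y x} \ A) x ∧
          relSize ρ (A ∩ {y | F y x}) ({y | F y x} \ A) x < 1) ∧
        ∀ x ∈ B, (A ∩ {y | E x y} ⊆ C ∨ {y | E x y} \ A ⊆ C) := by
  obtain ⟨g, hg⟩ := hE.exists_isBorelEnumeration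
  obtain ⟨S, hS⟩ := exists_isTileSystem hE.1 hg
  obtain ⟨D, hDG, hD, hdisj, hmax⟩ :=
    hS.exists_maximal hE.1 hg (hS.measurableSet_isBalanced hg hρ.1 hA r)
  set C₀ : Set X := ⋃ p ∈ D, S p
  have hC₀ : MeasurableSet C₀ := hS.measurableSet_biUnion hE.1 hg hD
  set B : Set X := (saturation E (A \ C₀) ∩ saturation E (C₀ᶜ \ A))ᶜ
  have hB : MeasurableSet B := ((hg.measurableSet_saturation (hA.diff hC₀)).inter
    (hg.measurableSet_saturation (hC₀.compl.diff hA))).compl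
  have hBinv : EInvariant E B :=
    ((eInvariant_saturation hE.1 _).inter (eInvariant_saturation hE.1 _)).compl hE.1
  have hsmooth : SmoothOn E ρ Bᶜ := by
    rw [compl_compl]
    exact smoothOn_saturation_inter hE hg hρ (hA.diff hC₀) (hC₀.compl.diff hA)
      (hS.finite_nearby_of_maximal hE.1 hρ hr0.le hr1 hmax)
  have hdisjB : (D ∩ Prod.snd ⁻¹' B).PairwiseDisjoint S := hdisj.subset inter_subset_left
  have hC := hS.biUnion_root_mem hE.1 hBinv D
  refine ⟨B, ⋃ p ∈ D ∩ Prod.snd ⁻¹' B, S p, hB, hBinv, hC ▸ hC₀.inter hB,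
    hC ▸ inter_subset_right, tileRel S (D ∩ Prod.snd ⁻¹' B),
    hS.isFinSubequivOn_tileRel hE.1 hg (hD.inter (measurable_snd hB)) hdisjB, hsmooth,
    fun x hx => hS.isBalanced_tileRel hE.1 hρ hdisjB (fun p hp => hDG hp.1) hx,
    fun x hx => hC ▸ hBinv.subset_inter_or_subset_inter hx hx⟩

end CocycleNadkarni
end
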